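/- Chain rule for the quantum relative entropy: Let E, F : M_d(ℂ) → M_{d'}(ℂ) be quantum channels and let ρ, σ be states on ℂ^d. Then D(E(ρ)‖F(σ)) ≤ D(ρ‖σ) + D^reg(E‖F) in the extended reals. -/

import Mathlib

open scoped Kronecker ComplexOrder

noncomputable section

namespace QCD

attribute [local instance] Classical.propDecidable

variable {n m : Type} [Fintype n] [DecidableEq n] [Fintype m] [DecidableEq m]

/-- The real part of the trace of a complex matrix. -/
def rtr (A : Matrix n n ℂ) : ℝ := (A.trace).re

/-- A quantum state: positive semidefinite with trace one. -/
def IsState (ρ : Matrix n n ℂ) : Prop := ρ.PosSemidef ∧ ρ.trace = 1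

/-- Loewner order: `A ≤ B` iff `B - A` is positive semidefinite. -/
def loewnerLE (A B : Matrix n n ℂ) : Prop := (B - A).PosSemidef

/-- Support containment (for PSD matrices): `ker σ ⊆ ker ρ`. -/
def SuppLE (ρ σ : Matrix n n ℂ) : Prop := ∀ v : n → ℂ, σ.mulVec v = 0 → ρ.mulVec v = 0

/-- Functional calculus for Hermitian matrices (junk value `0` otherwise). -/
def matFun (f : ℝ → ℝ) (A : Matrix n n ℂ) : Matrix n n ℂ :=
  if hA : A.IsHermitian then
    (hA.eigenvectorUnitary : Matrix n n ℂ) *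
      Matrix.diagonal (fun i => (f (hA.eigenvalues i) : ℂ)) *
      (star (hA.eigenvectorUnitary : Matrix n n ℂ))
  else 0

/-- Matrix square root via functional calculus. -/
def msqrt (A : Matrix n n ℂ) : Matrix n n ℂ := matFun Real.sqrt A

/-- Matrix real power taken on the support (`0 ^ t := 0`). -/
def mpow (A : Matrix n n ℂ) (t : ℝ) : Matrix n n ℂ :=
  matFun (fun x => if x = 0 then 0 else x ^ t) A

/-- Matrix base-2 logarithm on the support. -/
def mlog (A : Matrix n n ℂ) : Matrix n n ℂ := matFun (Real.logb 2) A

/-- Positive part of a Hermitian matrix. -/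
def mposPart (A : Matrix n n ℂ) : Matrix n n ℂ := matFun (fun x => max x 0) A

/-- Trace norm. -/
def traceNorm (A : Matrix n m ℂ) : ℝ := rtr (msqrt (A.conjTranspose * A))

/-- Base-2 logarithm as an extended real (`⊥` on nonpositive input). -/
def elog (x : ℝ) : EReal := if x ≤ 0 then ⊥ else ((Real.logb 2 x : ℝ) : EReal)

/-- Base-2 logarithm of an extended real. -/
def elogE (x : EReal) : EReal := if x = ⊤ then ⊤ else elog x.toReal

/-- `2 ^ x` for an extended real `x`. -/
def epow2 (x : EReal) : EReal :=
  if x = ⊤ then ⊤ else if x = ⊥ then 0 else ((((2:ℝ) ^ x.toReal : ℝ)) : EReal)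

/-- Umegaki relative entropy (base 2), `⊤` if the support condition fails. -/
def relEntropy (ρ σ : Matrix n n ℂ) : EReal :=
  if SuppLE ρ σ then ((rtr (ρ * (mlog ρ - mlog σ)) : ℝ) : EReal) else ⊤

/-- Petz–Rényi divergence (base 2). -/
def petzRenyi (α : ℝ) (ρ σ : Matrix n n ℂ) : EReal :=
  if 1 < α ∧ ¬ SuppLE ρ σ then ⊤
  else (((α - 1)⁻¹ : ℝ) : EReal) * elog (rtr (mpow ρ α * mpow σ (1 - α)))

/-- Geometric (maximal) Rényi divergence (base 2). -/
def geomRenyi (α : ℝ) (ρ σ : Matrix n n ℂ) : EReal :=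
  if SuppLE ρ σ then
    (((α - 1)⁻¹ : ℝ) : EReal) *
      elog (rtr (σ * mpow (mpow σ (-(1/2 : ℝ)) * ρ * mpow σ (-(1/2 : ℝ))) α))
  else ⊤

/-- Max-relative entropy (base 2). -/
def dMax (ρ σ : Matrix n n ℂ) : EReal :=
  sInf {x : EReal | ∃ lam : ℝ, x = (lam : EReal) ∧ loewnerLE ρ ((((2:ℝ) ^ lam : ℝ) : ℂ) • σ)}

/-- Uhlmann fidelity. -/
def fidelity (ρ σ : Matrix n n ℂ) : ℝ := (rtr (msqrt (msqrt σ * ρ * msqrt σ))) ^ 2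

/-- Sine (purified) distance. -/
def sineDist (ρ σ : Matrix n n ℂ) : ℝ := Real.sqrt (1 - fidelity ρ σ)

/-- Smoothed max-relative entropy: smoothing over states in the sine-distance ball. -/
def dMaxSmooth (δ : ℝ) (ρ σ : Matrix n n ℂ) : EReal :=
  ⨅ (ρ' : Matrix n n ℂ) (_ : IsState ρ' ∧ sineDist ρ ρ' ≤ δ), dMax ρ' σ

/-- Hypothesis testing divergence (base 2). -/
def dH (ε : ℝ) (ρ σ : Matrix n n ℂ) : EReal :=
  - elog (sInf {x : ℝ | ∃ T : Matrix n n ℂ,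
      T.PosSemidef ∧ ((1 : Matrix n n ℂ) - T).PosSemidef ∧ 1 - ε ≤ rtr (T * ρ) ∧ x = rtr (T * σ)})

/-- The quantity `c_γ(ρ‖σ)`. -/
def cGamma (γ : ℝ) (ρ σ : Matrix n n ℂ) : EReal :=
  ((γ⁻¹ : ℝ) : EReal) *
    elogE (epow2 ((γ : ℝ) * petzRenyi (1 + γ) ρ σ) +
           epow2 (((-γ : ℝ) : EReal) * petzRenyi (1 - γ) ρ σ) + 1)

/-- Binary entropy (base 2). -/
def binEnt (x : ℝ) : ℝ := -(x * Real.logb 2 x) - (1 - x) * Real.logb 2 (1 - x)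

/-- Action of `id_k ⊗ Φ` on block matrices. -/
def blockApply {k : Type} (Φ : Matrix n n ℂ →ₗ[ℂ] Matrix m m ℂ)
    (M : Matrix (k × n) (k × n) ℂ) : Matrix (k × m) (k × m) ℂ :=
  Matrix.of fun p q => Φ (Matrix.of fun a b => M (p.1, a) (q.1, b)) p.2 q.2

/-- Action of `Φ ⊗ id_k` on block matrices. -/
def blockApplyRight {k : Type} (Φ : Matrix n n ℂ →ₗ[ℂ] Matrix m m ℂ)
    (M : Matrix (n × k) (n × k) ℂ) : Matrix (m × k) (m × k) ℂ :=
  Matrix.of fun p q => Φ (Matrix.of fun a b => M (a, p.2) (b, q.2)) p.1 q.1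

/-- Quantum channel: trace preserving and completely positive. -/
def IsQChannel (Φ : Matrix n n ℂ →ₗ[ℂ] Matrix m m ℂ) : Prop :=
  (∀ M : Matrix n n ℂ, (Φ M).trace = M.trace) ∧
  (∀ k : ℕ, 1 ≤ k → ∀ M : Matrix (Fin k × n) (Fin k × n) ℂ, M.PosSemidef →
    (blockApply Φ M).PosSemidef)

/-- `id_k ⊗ Φ` as a linear map. -/
def blockApplyL (k : Type) (Φ : Matrix n n ℂ →ₗ[ℂ] Matrix m m ℂ) :
    Matrix (k × n) (k × n) ℂ →ₗ[ℂ] Matrix (k × m) (k × m) ℂ where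
  toFun := blockApply Φ
  map_add' M N := by
    ext p q
    show Φ (Matrix.of fun a b => (M + N) (p.1, a) (q.1, b)) p.2 q.2 = _
    have h : (Matrix.of fun a b => (M + N) (p.1, a) (q.1, b)) =
        (Matrix.of fun a b => M (p.1, a) (q.1, b)) +
          (Matrix.of fun a b => N (p.1, a) (q.1, b)) := rfl
    rw [h, map_add]
    rfl
  map_smul' c M := by
    ext p q
    show Φ (Matrix.of fun a b => (c • M) (p.1, a) (q.1, b)) p.2 q.2 = _
    have h : (Matrix.of fun a b => (c • M) (p.1, a) (q.1, b)) =
        c • (Matrix.of fun a b => M (p.1, a) (q.1, b)) := rfl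
    rw [h, map_smul]
    rfl

/-- `Φ ⊗ id_k` as a linear map. -/
def blockApplyRightL (k : Type) (Φ : Matrix n n ℂ →ₗ[ℂ] Matrix m m ℂ) :
    Matrix (n × k) (n × k) ℂ →ₗ[ℂ] Matrix (m × k) (m × k) ℂ where
  toFun := blockApplyRight Φ
  map_add' M N := by
    ext p q
    show Φ (Matrix.of fun a b => (M + N) (a, p.2) (b, q.2)) p.1 q.1 = _
    have h : (Matrix.of fun a b => (M + N) (a, p.2) (b, q.2)) =
        (Matrix.of fun a b => M (a, p.2) (b, q.2)) +
          (Matrix.of fun a b => N (a, p.2) (b, q.2)) := rfl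
    rw [h, map_add]
    rfl
  map_smul' c M := by
    ext p q
    show Φ (Matrix.of fun a b => (c • M) (a, p.2) (b, q.2)) p.1 q.1 = _
    have h : (Matrix.of fun a b => (c • M) (a, p.2) (b, q.2)) =
        c • (Matrix.of fun a b => M (a, p.2) (b, q.2)) := rfl
    rw [h, map_smul]
    rfl

/-- Tensor product of two channels (Kronecker product action). -/
def tensorChannel {n₁ m₁ n₂ m₂ : Type}
    (E₁ : Matrix n₁ n₁ ℂ →ₗ[ℂ] Matrix m₁ m₁ ℂ) (E₂ : Matrix n₂ n₂ ℂ →ₗ[ℂ] Matrix m₂ m₂ ℂ) :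
    Matrix (n₁ × n₂) (n₁ × n₂) ℂ →ₗ[ℂ] Matrix (m₁ × m₂) (m₁ × m₂) ℂ :=
  (blockApplyRightL m₂ E₁).comp (blockApplyL n₁ E₂)

/-- Index type for `k`-fold tensor powers. -/
def tpow (ι : Type) : ℕ → Type
  | 0 => PUnit
  | (k+1) => tpow ι k × ι

def tpowFintype (ι : Type) [Fintype ι] : ∀ k : ℕ, Fintype (tpow ι k)
  | 0 => inferInstanceAs (Fintype PUnit)
  | (k+1) => letI := tpowFintype ι k; inferInstanceAs (Fintype (tpow ι k × ι))

instance (ι : Type) [Fintype ι] (k : ℕ) : Fintype (tpow ι k) := tpowFintype ι k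

def tpowDecEq (ι : Type) [DecidableEq ι] : ∀ k : ℕ, DecidableEq (tpow ι k)
  | 0 => inferInstanceAs (DecidableEq PUnit)
  | (k+1) => letI := tpowDecEq ι k; inferInstanceAs (DecidableEq (tpow ι k × ι))

instance (ι : Type) [DecidableEq ι] (k : ℕ) : DecidableEq (tpow ι k) := tpowDecEq ι k

/-- `k`-fold Kronecker tensor power of a matrix. -/
def tpowMat (ρ : Matrix n n ℂ) : ∀ k : ℕ, Matrix (tpow n k) (tpow n k) ℂ
  | 0 => 1
  | (k+1) => (tpowMat ρ k) ⊗ₖ ρ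

/-- `k`-fold tensor power of a channel. -/
def tpowChannel (Φ : Matrix n n ℂ →ₗ[ℂ] Matrix m m ℂ) :
    ∀ k : ℕ, Matrix (tpow n k) (tpow n k) ℂ →ₗ[ℂ] Matrix (tpow m k) (tpow m k) ℂ
  | 0 => LinearMap.id
  | (k+1) => tensorChannel (tpowChannel Φ k) Φ

/-- Channel divergence induced by a divergence `𝔇` on states:
sup over `k ≥ 1` and input states `ν` on `ℂ^k ⊗ ℂ^d`. -/
def chDiv (𝔇 : ∀ (p : Type) [Fintype p] [DecidableEq p], Matrix p p ℂ → Matrix p p ℂ → EReal)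
    (E F : Matrix n n ℂ →ₗ[ℂ] Matrix m m ℂ) : EReal :=
  ⨆ (k : ℕ) (_ : 1 ≤ k) (ν : Matrix (Fin k × n) (Fin k × n) ℂ) (_ : IsState ν),
    𝔇 (Fin k × m) (blockApply E ν) (blockApply F ν)

/-- The geometric Rényi divergence as a divergence family. -/
def geomD (α : ℝ) : ∀ (p : Type) [Fintype p] [DecidableEq p],
    Matrix p p ℂ → Matrix p p ℂ → EReal :=
  fun _ _ _ => geomRenyi α

/-- The Umegaki relative entropy as a divergence family. -/
def relD : ∀ (p : Type) [Fintype p] [DecidableEq p],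
    Matrix p p ℂ → Matrix p p ℂ → EReal :=
  fun _ _ _ => relEntropy

/-- The hypothesis testing divergence as a divergence family. -/
def dHD (ε : ℝ) : ∀ (p : Type) [Fintype p] [DecidableEq p],
    Matrix p p ℂ → Matrix p p ℂ → EReal :=
  fun _ _ _ => dH ε

/-- Regularized channel relative entropy. -/
def regRelEntropy (E F : Matrix n n ℂ →ₗ[ℂ] Matrix m m ℂ) : EReal :=
  ⨆ (k : ℕ) (_ : 1 ≤ k),
    (((k : ℝ)⁻¹ : ℝ) : EReal) * chDiv relD (tpowChannel E k) (tpowChannel F k)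

end QCD

namespace QCD

section Spectral
open scoped MatrixOrder
open Matrix

variable {n m : Type} [Fintype n] [DecidableEq n] [Fintype m] [DecidableEq m]

/-- Unitary matrices, in unbundled form. -/
def IsU (U : Matrix n n ℂ) : Prop := Uᴴ * U = 1 ∧ U * Uᴴ = 1

/-- Hermitian matrix with eigenbasis `U` and eigenvalues `a`. -/
def ud (U : Matrix n n ℂ) (a : n → ℝ) : Matrix n n ℂ :=
  U * diagonal (fun i => (a i : ℂ)) * Uᴴ

lemma matFun_ud (f : ℝ → ℝ) {U : Matrix n n ℂ} (hU : IsU U) (a : n → ℝ) :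
    matFun f (ud U a) = ud U (fun i => f (a i)) := by
  have hA : (ud U a).IsHermitian := by
    unfold ud
    apply isHermitian_mul_mul_conjTranspose
    rw [isHermitian_diagonal_iff]
    intro i
    simp [IsSelfAdjoint, Complex.conj_ofReal]
  unfold matFun
  rw [dif_pos hA]
  set V : Matrix n n ℂ := (hA.eigenvectorUnitary : Matrix n n ℂ) with hV
  have hV1 : star V * V = 1 := by
    rw [hV]; exact Unitary.star_mul_self_of_mem hA.eigenvectorUnitary.2
  have hV2 : V * star V = 1 := by
    rw [hV]; exact Unitary.mul_star_self_of_mem hA.eigenvectorUnitary.2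
  have hsp : ud U a = V * diagonal (fun i => (hA.eigenvalues i : ℂ)) * star V := by
    conv_lhs => rw [hA.spectral_theorem]
    rfl
  set ev := hA.eigenvalues
  have hW : diagonal (fun i => (ev i : ℂ)) * (star V * U) =
      (star V * U) * diagonal (fun i => (a i : ℂ)) := by
    have h1 : star V * ud U a * U = diagonal (fun i => (ev i : ℂ)) * (star V * U) := by
      rw [hsp]
      calc star V * (V * diagonal (fun i => (ev i : ℂ)) * star V) * U
          = (star V * V) * diagonal (fun i => (ev i : ℂ)) * (star V * U) := by
            simp only [Matrix.mul_assoc]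
        _ = _ := by rw [hV1, Matrix.one_mul]
    rw [← h1]
    unfold ud
    calc star V * (U * diagonal (fun i => (a i : ℂ)) * Uᴴ) * U
        = (star V * U) * diagonal (fun i => (a i : ℂ)) * (Uᴴ * U) := by
          simp only [Matrix.mul_assoc]
      _ = _ := by rw [hU.1, Matrix.mul_one]
  have hW' : diagonal (fun i => ((f (ev i) : ℝ) : ℂ)) * (star V * U) =
      (star V * U) * diagonal (fun i => ((f (a i) : ℝ) : ℂ)) := by
    ext i j
    have := congrFun (congrFun hW i) j
    rw [diagonal_mul, mul_diagonal] at this ⊢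
    by_cases h : (star V * U) i j = 0
    · rw [h]; ring
    · have h2 : (ev i : ℂ) = a j := by
        apply mul_right_cancel₀ h
        rw [this]; ring
      have h3 : ev i = a j := by exact_mod_cast h2
      rw [h3]; ring
  calc V * diagonal (fun i => ((f (ev i) : ℝ) : ℂ)) * star V
      = V * diagonal (fun i => ((f (ev i) : ℝ) : ℂ)) * star V * (U * Uᴴ) := by
        rw [hU.2, Matrix.mul_one]
    _ = V * (diagonal (fun i => ((f (ev i) : ℝ) : ℂ)) * (star V * U)) * Uᴴ := by
        simp only [Matrix.mul_assoc]
    _ = (V * star V) * U * diagonal (fun i => ((f (a i) : ℝ) : ℂ)) * Uᴴ := by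
        rw [hW']; simp only [Matrix.mul_assoc]
    _ = _ := by rw [hV2, Matrix.one_mul]; rfl

lemma exists_ud {A : Matrix n n ℂ} (hA : A.IsHermitian) :
    ∃ (U : Matrix n n ℂ) (a : n → ℝ), IsU U ∧ A = ud U a := by
  refine ⟨(hA.eigenvectorUnitary : Matrix n n ℂ), hA.eigenvalues, ⟨?_, ?_⟩, ?_⟩
  · exact Unitary.star_mul_self_of_mem hA.eigenvectorUnitary.2
  · exact Unitary.mul_star_self_of_mem hA.eigenvectorUnitary.2
  · conv_lhs => rw [hA.spectral_theorem]
    rfl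

lemma ud_add (U : Matrix n n ℂ) (a b : n → ℝ) :
    ud U a + ud U b = ud U (fun i => a i + b i) := by
  unfold ud
  rw [← Matrix.add_mul, ← Matrix.mul_add, diagonal_add]
  simp

lemma ud_sub (U : Matrix n n ℂ) (a b : n → ℝ) :
    ud U a - ud U b = ud U (fun i => a i - b i) := by
  unfold ud
  rw [← Matrix.sub_mul, ← Matrix.mul_sub, diagonal_sub]
  simp

lemma ud_mul {U : Matrix n n ℂ} (hU : IsU U) (a b : n → ℝ) :
    ud U a * ud U b = ud U (fun i => a i * b i) := by
  unfold ud
  calc U * diagonal (fun i => (a i : ℂ)) * Uᴴ * (U * diagonal (fun i => (b i : ℂ)) * Uᴴ)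
      = U * diagonal (fun i => (a i : ℂ)) * (Uᴴ * U) * diagonal (fun i => (b i : ℂ)) * Uᴴ := by
        simp only [Matrix.mul_assoc]
    _ = _ := by
        rw [hU.1, Matrix.mul_one, Matrix.mul_assoc U, diagonal_mul_diagonal]
        simp

lemma ud_const {U : Matrix n n ℂ} (hU : IsU U) (c : ℝ) :
    ud U (fun _ => c) = (c : ℂ) • (1 : Matrix n n ℂ) := by
  unfold ud
  rw [← smul_one_eq_diagonal, Matrix.mul_smul, Matrix.smul_mul, Matrix.mul_one, hU.2]

lemma ud_smul (U : Matrix n n ℂ) (c : ℝ) (a : n → ℝ) :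
    (c : ℂ) • ud U a = ud U (fun i => c * a i) := by
  unfold ud
  rw [← Matrix.smul_mul, ← Matrix.mul_smul]
  congr 3
  ext i j
  by_cases h : i = j
  · subst h; simp
  · simp [h]

lemma ud_psd (U : Matrix n n ℂ) {a : n → ℝ} (ha : ∀ i, 0 ≤ a i) : (ud U a).PosSemidef := by
  unfold ud
  apply PosSemidef.mul_mul_conjTranspose_same
  apply PosSemidef.diagonal
  intro i
  simpa using ha i

lemma ud_le (U : Matrix n n ℂ) {a b : n → ℝ} (h : ∀ i, a i ≤ b i) : ud U a ≤ ud U b := by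
  rw [Matrix.le_iff, ud_sub]
  exact ud_psd U fun i => sub_nonneg.2 (h i)

lemma ud_herm (U : Matrix n n ℂ) (a : n → ℝ) : (ud U a).IsHermitian := by
  unfold ud
  apply isHermitian_mul_mul_conjTranspose
  rw [isHermitian_diagonal_iff]
  intro i
  simp [IsSelfAdjoint, Complex.conj_ofReal]

lemma ud_conj {U : Matrix n n ℂ} (hU : IsU U) (a : n → ℝ) :
    Uᴴ * ud U a * U = diagonal (fun i => (a i : ℂ)) := by
  unfold ud
  calc Uᴴ * (U * diagonal (fun i => (a i : ℂ)) * Uᴴ) * U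
      = (Uᴴ * U) * diagonal (fun i => (a i : ℂ)) * (Uᴴ * U) := by simp only [Matrix.mul_assoc]
    _ = _ := by rw [hU.1, Matrix.one_mul, Matrix.mul_one]

lemma ud_psd_iff {U : Matrix n n ℂ} (hU : IsU U) {a : n → ℝ} :
    (ud U a).PosSemidef ↔ ∀ i, 0 ≤ a i := by
  refine ⟨fun h i => ?_, ud_psd U⟩
  have h1 := h.conjTranspose_mul_mul_same U
  rw [ud_conj hU, posSemidef_diagonal_iff] at h1
  simpa using h1 i

lemma exists_ud_psd {A : Matrix n n ℂ} (hA : A.PosSemidef) :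
    ∃ (U : Matrix n n ℂ) (a : n → ℝ), IsU U ∧ A = ud U a ∧ ∀ i, 0 ≤ a i := by
  obtain ⟨U, a, hU, rfl⟩ := exists_ud hA.1
  exact ⟨U, a, hU, rfl, (ud_psd_iff hU).1 hA⟩

lemma rtr_add (A B : Matrix n n ℂ) : rtr (A + B) = rtr A + rtr B := by
  simp [rtr, trace_add]

lemma rtr_sub (A B : Matrix n n ℂ) : rtr (A - B) = rtr A - rtr B := by
  simp [rtr, trace_sub]

lemma rtr_smul (c : ℝ) (A : Matrix n n ℂ) : rtr ((c : ℂ) • A) = c * rtr A := by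
  simp [rtr, trace_smul]

lemma rtr_nonneg {A : Matrix n n ℂ} (hA : A.PosSemidef) : 0 ≤ rtr A := by
  have := hA.trace_nonneg
  exact (Complex.le_def.1 this).1

lemma rtr_mono {A B : Matrix n n ℂ} (h : A ≤ B) : rtr A ≤ rtr B := by
  have := rtr_nonneg (Matrix.le_iff.1 h)
  rw [rtr_sub] at this
  linarith

lemma rtr_comm (A : Matrix n m ℂ) (B : Matrix m n ℂ) : rtr (A * B) = rtr (B * A) := by
  unfold rtr; rw [trace_mul_comm]

lemma rtr_mul_ud (X U : Matrix n n ℂ) (a : n → ℝ) :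
    rtr (X * ud U a) = ∑ i, a i * ((Uᴴ * X * U) i i).re := by
  unfold ud
  rw [← Matrix.mul_assoc, rtr_comm, ← Matrix.mul_assoc, ← Matrix.mul_assoc]
  unfold rtr trace
  simp only [diag_apply, mul_diagonal, Complex.re_sum]
  apply Finset.sum_congr rfl
  intro i _
  rw [Complex.mul_re]; simp; ring

lemma sum_conj_diag {U : Matrix n n ℂ} (hU : IsU U) (X : Matrix n n ℂ) :
    ∑ i, ((Uᴴ * X * U) i i).re = rtr X := by
  have := rtr_mul_ud X U (fun _ => 1)
  rw [ud_const hU] at this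
  simp at this
  exact this.symm

lemma conj_diag_nonneg {X : Matrix n n ℂ} (hX : X.PosSemidef) (U : Matrix n n ℂ) (i : n) :
    0 ≤ ((Uᴴ * X * U) i i).re := by
  have := (hX.conjTranspose_mul_mul_same U).diag_nonneg (i := i)
  exact (Complex.le_def.1 this).1

/-- trace of a product of PSD matrices -/
lemma rtr_mul_nonneg {X Y : Matrix n n ℂ} (hX : X.PosSemidef) (hY : Y.PosSemidef) :
    0 ≤ rtr (X * Y) := by
  obtain ⟨U, a, hU, rfl, ha⟩ := exists_ud_psd hY
  rw [rtr_mul_ud]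
  exact Finset.sum_nonneg fun i _ => mul_nonneg (ha i) (conj_diag_nonneg hX U i)

lemma rtr_mul_mono {X Y Z : Matrix n n ℂ} (hX : X.PosSemidef) (h : Y ≤ Z) :
    rtr (X * Y) ≤ rtr (X * Z) := by
  have := rtr_mul_nonneg hX (Matrix.le_iff.1 h)
  rw [Matrix.mul_sub, rtr_sub] at this
  linarith

lemma mlog_ud {U : Matrix n n ℂ} (hU : IsU U) (a : n → ℝ) :
    mlog (ud U a) = ud U (fun i => Real.logb 2 (a i)) := matFun_ud _ hU a

lemma exists_le_smul_one {A : Matrix n n ℂ} (hA : A.IsHermitian) :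
    ∃ c : ℝ, 0 ≤ c ∧ A ≤ (c : ℂ) • (1 : Matrix n n ℂ) := by
  obtain ⟨U, a, hU, rfl⟩ := exists_ud hA
  refine ⟨∑ i, |a i|, Finset.sum_nonneg fun i _ => abs_nonneg _, ?_⟩
  rw [← ud_const hU]
  apply ud_le
  intro i
  exact (le_abs_self _).trans
    (Finset.single_le_sum (f := fun i => |a i|) (fun i _ => abs_nonneg _) (Finset.mem_univ i))

/-- Klein's inequality. -/
lemma klein {ω θ : Matrix n n ℂ} (hω : IsState ω) (hθ : θ.PosDef) (hθ1 : θ.trace = 1) :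
    rtr (ω * mlog θ) ≤ rtr (ω * mlog ω) := by
  obtain ⟨U, w, hU, hω', hw⟩ := exists_ud_psd hω.1
  obtain ⟨V, t, hV, hθ'⟩ := exists_ud hθ.1
  have ht : ∀ i, 0 < t i := by
    intro i
    have h1 : (Vᴴ * θ * V).PosDef := by
      apply hθ.conjTranspose_mul_mul_same
      intro x y hxy
      have := congrArg (fun z => Vᴴ.mulVec z) hxy
      simpa [mulVec_mulVec, hV.1] using this
    rw [hθ', ud_conj hV] at h1
    have := h1.diag_pos (i := i)
    simpa using this
  rw [hω', hθ', mlog_ud hU, mlog_ud hV, rtr_mul_ud, rtr_mul_ud, ud_conj hU]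
  simp only [diagonal_apply_eq, Complex.ofReal_re]
  set P : n → n → ℝ := fun i j => Complex.normSq ((Uᴴ * V) i j) with hP
  have hPn : ∀ i j, 0 ≤ P i j := fun i j => Complex.normSq_nonneg _
  have hcol : ∀ j, ∑ i, P i j = 1 := by
    intro j
    have h : ((Uᴴ * V)ᴴ * (Uᴴ * V)) j j = 1 := by
      rw [conjTranspose_mul, conjTranspose_conjTranspose]
      have : Vᴴ * U * (Uᴴ * V) = 1 := by
        calc Vᴴ * U * (Uᴴ * V) = Vᴴ * (U * Uᴴ) * V := by simp only [Matrix.mul_assoc]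
          _ = 1 := by rw [hU.2, Matrix.mul_one, hV.1]
      rw [this]; simp
    rw [Matrix.mul_apply] at h
    have h2 := congrArg Complex.re h
    rw [Complex.re_sum] at h2
    simp only [Complex.one_re] at h2
    rw [← h2]
    apply Finset.sum_congr rfl
    intro i _
    rw [conjTranspose_apply, hP]
    simp [Complex.normSq_apply, Complex.mul_re]
  have hrow : ∀ i, ∑ j, P i j = 1 := by
    intro i
    have h : ((Uᴴ * V) * (Uᴴ * V)ᴴ) i i = 1 := by
      rw [conjTranspose_mul, conjTranspose_conjTranspose]
      have : Uᴴ * V * (Vᴴ * U) = 1 := by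
        calc Uᴴ * V * (Vᴴ * U) = Uᴴ * (V * Vᴴ) * U := by simp only [Matrix.mul_assoc]
          _ = 1 := by rw [hV.2, Matrix.mul_one, hU.1]
      rw [this]; simp
    rw [Matrix.mul_apply] at h
    have h2 := congrArg Complex.re h
    rw [Complex.re_sum] at h2
    simp only [Complex.one_re] at h2
    rw [← h2]
    apply Finset.sum_congr rfl
    intro j _
    rw [conjTranspose_apply, hP]
    simp [Complex.normSq_apply, Complex.mul_re]
  have hdiag : ∀ j, ((Vᴴ * ud U w * V) j j).re = ∑ i, w i * P i j := by
    intro j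
    have : Vᴴ * ud U w * V = (Uᴴ * V)ᴴ * diagonal (fun i => (w i : ℂ)) * (Uᴴ * V) := by
      unfold ud
      rw [conjTranspose_mul, conjTranspose_conjTranspose]
      simp only [Matrix.mul_assoc]
    rw [this, Matrix.mul_apply, Complex.re_sum]
    apply Finset.sum_congr rfl
    intro i _
    rw [mul_diagonal, conjTranspose_apply, hP]
    simp [Complex.normSq_apply, Complex.mul_re]
    ring
  have hsw : ∑ i, w i = 1 := by
    have h := sum_conj_diag hU ω
    rw [hω', ud_conj hU] at h
    simp only [diagonal_apply_eq, Complex.ofReal_re] at h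
    rw [h, ← hω', rtr, hω.2]; simp
  have hst : ∑ i, t i = 1 := by
    have h := sum_conj_diag hV θ
    rw [hθ', ud_conj hV] at h
    simp only [diagonal_apply_eq, Complex.ofReal_re] at h
    rw [h, ← hθ', rtr, hθ1]; simp
  have key : ∀ i j, P i j * (w i - t j) ≤
      P i j * (w i * Real.log (w i) - w i * Real.log (t j)) := by
    intro i j
    apply mul_le_mul_of_nonneg_left _ (hPn i j)
    rcases (hw i).eq_or_lt with h | h
    · rw [← h]; simpa using (ht j).le
    · have h1 : Real.log (t j / w i) ≤ t j / w i - 1 :=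
        Real.log_le_sub_one_of_pos (div_pos (ht j) h)
      rw [Real.log_div (ht j).ne' h.ne'] at h1
      have h2 := mul_le_mul_of_nonneg_left h1 h.le
      have h3 : w i * (t j / w i - 1) = t j - w i := by field_simp
      rw [h3] at h2
      linarith
  have hsum := Finset.sum_le_sum fun i (_ : i ∈ Finset.univ) =>
    Finset.sum_le_sum fun j (_ : j ∈ Finset.univ) => key i j
  have hL : ∑ i, ∑ j, P i j * (w i - t j) = 0 := by
    simp only [mul_sub, Finset.sum_sub_distrib]
    rw [Finset.sum_comm (f := fun i j => P i j * t j)]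
    simp only [← Finset.sum_mul, hrow, hcol, one_mul, hsw, hst, sub_self]
  have hR : ∑ i, ∑ j, P i j * (w i * Real.log (w i) - w i * Real.log (t j)) =
      ∑ i, w i * Real.log (w i) - ∑ j, Real.log (t j) * ∑ i, w i * P i j := by
    simp only [mul_sub, Finset.sum_sub_distrib]
    congr 1
    · simp only [← Finset.sum_mul, hrow, one_mul]
    · rw [Finset.sum_comm]
      apply Finset.sum_congr rfl
      intro j _
      rw [Finset.mul_sum]
      apply Finset.sum_congr rfl
      intro i _
      ring
  rw [hL, hR] at hsum
  simp only [hdiag, Real.logb]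
  have hl2 : 0 < Real.log 2 := Real.log_pos one_lt_two
  have e1 : ∑ i, Real.log (w i) / Real.log 2 * w i = (∑ i, w i * Real.log (w i)) / Real.log 2 := by
    rw [Finset.sum_div]; apply Finset.sum_congr rfl; intro i _; ring
  have e2 : ∑ j, Real.log (t j) / Real.log 2 * ∑ i, w i * P i j =
      (∑ j, Real.log (t j) * ∑ i, w i * P i j) / Real.log 2 := by
    rw [Finset.sum_div]; apply Finset.sum_congr rfl; intro i _; ring
  rw [e1, e2]
  exact div_le_div_of_nonneg_right (by linarith) hl2.le

end Spectral

section LogMono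
open scoped MatrixOrder Matrix.Norms.L2Operator
open Matrix

variable {n m : Type} [Fintype n] [DecidableEq n] [Fintype m] [DecidableEq m]

lemma mlog_mono {A B : Matrix n n ℂ} (hA : A.PosDef) (h : A ≤ B) : mlog A ≤ mlog B := by
  have hAs : IsStrictlyPositive A := Matrix.isStrictlyPositive_iff_posDef.2 hA
  have hlog := CFC.log_le_log h hAs
  have hB : B.IsHermitian := by
    have := hA.1.add (Matrix.le_iff.1 h).1
    simpa using this
  have key : ∀ {C : Matrix n n ℂ} (hC : C.IsHermitian),
      mlog C = (((Real.log 2)⁻¹ : ℝ) : ℂ) • CFC.log C := by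
    intro C hC
    have h1 : CFC.log C = matFun Real.log C := by
      unfold CFC.log
      rw [hC.cfc_eq]
      unfold matFun
      rw [dif_pos hC]
      rfl
    rw [h1]
    obtain ⟨U, a, hU, rfl⟩ := exists_ud hC
    rw [mlog_ud hU, matFun_ud _ hU, ud_smul]
    congr 1
    ext i
    rw [Real.logb, div_eq_inv_mul]
  rw [key hA.1, key hB, Matrix.le_iff, ← smul_sub]
  apply PosSemidef.smul (Matrix.le_iff.1 hlog)
  have : 0 ≤ (Real.log 2)⁻¹ := inv_nonneg.2 (Real.log_nonneg one_le_two)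
  exact_mod_cast this

end LogMono

section Tools
open scoped MatrixOrder
open Matrix

variable {n m : Type} [Fintype n] [DecidableEq n] [Fintype m] [DecidableEq m]

lemma supp_diag {ω V : Matrix n n ℂ} {a : n → ℝ} (hV : IsU V) (h : SuppLE ω (ud V a))
    {j : n} (hj : a j = 0) : (Vᴴ * ω * V) j j = 0 := by
  have h1 : (ud V a).mulVec (V.mulVec (Pi.single j 1)) = 0 := by
    rw [mulVec_mulVec]
    have : ud V a * V = V * diagonal (fun i => (a i : ℂ)) := by
      unfold ud
      rw [Matrix.mul_assoc, hV.1, Matrix.mul_one]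
    rw [this, ← mulVec_mulVec]
    have h2 : (diagonal (fun i => (a i : ℂ))).mulVec (Pi.single j 1) = 0 := by
      ext i
      rw [mulVec_diagonal]
      by_cases hij : i = j
      · subst hij; simp [hj]
      · simp [hij]
    rw [h2, mulVec_zero]
  have h3 := h _ h1
  have h4 : (Vᴴ * ω * V).mulVec (Pi.single j 1) = 0 := by
    rw [← mulVec_mulVec, ← mulVec_mulVec, h3, mulVec_zero]
  have h5 := congrFun h4 j
  simpa using h5

lemma mlog_pert_eq {V : Matrix n n ℂ} (hV : IsU V) (a : n → ℝ) (η : ℝ) (ω : Matrix n n ℂ) :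
    rtr (ω * mlog (ud V a + (η : ℂ) • (1 : Matrix n n ℂ))) =
      ∑ i, Real.logb 2 (a i + η) * ((Vᴴ * ω * V) i i).re := by
  rw [← ud_const hV, ud_add, mlog_ud hV, rtr_mul_ud]

lemma mlog_pert_le {ω A : Matrix n n ℂ} (hω : ω.PosSemidef) (hA : A.PosSemidef)
    (h : SuppLE ω A) {η : ℝ} (hη : 0 < η) :
    rtr (ω * mlog A) ≤ rtr (ω * mlog (A + (η : ℂ) • (1 : Matrix n n ℂ))) := by
  obtain ⟨V, a, hV, rfl, ha⟩ := exists_ud_psd hA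
  rw [mlog_pert_eq hV, mlog_ud hV, rtr_mul_ud]
  apply Finset.sum_le_sum
  intro i _
  rcases (ha i).eq_or_lt with h0 | h0
  · rw [supp_diag hV h h0.symm]; simp
  · apply mul_le_mul_of_nonneg_right _ (conj_diag_nonneg hω V i)
    exact Real.logb_le_logb_of_le one_lt_two h0 (by linarith)

lemma mlog_pert_tendsto {ω A : Matrix n n ℂ} (hA : A.PosSemidef) (h : SuppLE ω A) :
    Filter.Tendsto (fun η : ℝ => rtr (ω * mlog (A + (η : ℂ) • (1 : Matrix n n ℂ))))
      (nhdsWithin 0 (Set.Ioi 0)) (nhds (rtr (ω * mlog A))) := by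
  obtain ⟨V, a, hV, rfl, ha⟩ := exists_ud_psd hA
  simp only [mlog_pert_eq hV]
  rw [mlog_ud hV, rtr_mul_ud]
  apply tendsto_finsetSum
  intro i _
  rcases (ha i).eq_or_lt with h0 | h0
  · rw [supp_diag hV h h0.symm]; simp
  · apply Filter.Tendsto.mul_const
    apply Filter.Tendsto.mono_left _ nhdsWithin_le_nhds
    have hc : ContinuousAt (fun η : ℝ => Real.logb 2 (a i + η)) 0 := by
      unfold Real.logb
      apply ContinuousAt.div_const
      apply ContinuousAt.log
      · fun_prop
      · simpa using h0.ne'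
    have := hc.tendsto
    simpa using this

lemma suppLE_of_le {A B : Matrix n n ℂ} (hA : A.PosSemidef) (hB : B.PosSemidef) (c : ℝ)
    (h : A ≤ (c : ℂ) • B) : SuppLE A B := by
  intro v hv
  rw [← hA.dotProduct_mulVec_zero_iff]
  have h1 := (Matrix.le_iff.1 h).dotProduct_mulVec_nonneg v
  have h2 := hA.dotProduct_mulVec_nonneg v
  rw [sub_mulVec, smul_mulVec, hv, smul_zero, zero_sub, dotProduct_neg] at h1
  exact le_antisymm (neg_nonneg.1 h1) h2

lemma posSemidef_le_of_suppLE {A B : Matrix n n ℂ} (hA : A.PosSemidef) (hB : B.PosSemidef)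
    (h : SuppLE A B) : ∃ c : ℝ, A ≤ (c : ℂ) • B := by
  obtain ⟨V, b, hV, rfl, hb⟩ := exists_ud_psd hB
  obtain ⟨c, hc0, hc⟩ := exists_le_smul_one hA.1
  set p : n → ℝ := fun i => if b i = 0 then 0 else 1 with hp
  have hpp : A * ud V p = A := by
    have h0 : A * ud V (fun i => 1 - p i) = 0 := by
      have h1 : A * V * diagonal (fun i => ((1 - p i : ℝ) : ℂ)) = 0 := by
        ext i j
        rw [mul_diagonal]
        by_cases hj : b j = 0
        · have h2 : (ud V b).mulVec (V.mulVec (Pi.single j 1)) = 0 := by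
            rw [mulVec_mulVec]
            have : ud V b * V = V * diagonal (fun i => (b i : ℂ)) := by
              unfold ud
              rw [Matrix.mul_assoc, hV.1, Matrix.mul_one]
            rw [this, ← mulVec_mulVec]
            have h2 : (diagonal (fun i => (b i : ℂ))).mulVec (Pi.single j 1) = 0 := by
              ext i
              rw [mulVec_diagonal]
              by_cases hij : i = j
              · subst hij; simp [hj]
              · simp [hij]
            rw [h2, mulVec_zero]
          have h3 := congrFun (h _ h2) i
          rw [mulVec_mulVec] at h3
          have h4 : (A * V) i j = 0 := by simpa using h3
          rw [h4]; simp
        · simp [hp, hj]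
      unfold ud
      rw [← Matrix.mul_assoc, ← Matrix.mul_assoc, h1, Matrix.zero_mul]
    rw [← ud_sub, Matrix.mul_sub, ud_const hV] at h0
    simp at h0
    exact (sub_eq_zero.1 h0).symm
  have hpA : ud V p * A = A := by
    have := congrArg conjTranspose hpp
    rwa [conjTranspose_mul, (ud_herm V p).eq, hA.1.eq] at this
  have h1 : A ≤ (c : ℂ) • ud V p := by
    rw [Matrix.le_iff]
    have := (Matrix.le_iff.1 hc).conjTranspose_mul_mul_same (ud V p)
    rw [(ud_herm V p).eq, Matrix.mul_sub, Matrix.sub_mul, hpA, hpp, Matrix.mul_smul,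
      Matrix.smul_mul, Matrix.mul_one, ud_mul hV] at this
    convert this using 4
    ext i
    simp only [hp]; split_ifs <;> simp
  refine ⟨c * ∑ i, (b i)⁻¹, h1.trans ?_⟩
  rw [ud_smul, ud_smul]
  apply ud_le
  intro i
  rw [mul_assoc]
  apply mul_le_mul_of_nonneg_left _ hc0
  simp only [hp]
  split_ifs with h0
  · rw [h0]; simp
  · have hpos : 0 < b i := lt_of_le_of_ne (hb i) (Ne.symm h0)
    have h2 : (b i)⁻¹ ≤ ∑ i, (b i)⁻¹ :=
      Finset.single_le_sum (f := fun i => (b i)⁻¹) (fun j _ => inv_nonneg.2 (hb j))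
        (Finset.mem_univ i)
    calc (1 : ℝ) = (b i)⁻¹ * b i := by field_simp
      _ ≤ _ := mul_le_mul_of_nonneg_right h2 hpos.le

lemma exists_factor {ρ : Matrix n n ℂ} (hρ : ρ.PosSemidef) :
    ∃ R : Matrix n n ℂ, ρ = R * Rᴴ := by
  obtain ⟨U, a, hU, rfl, ha⟩ := exists_ud_psd hρ
  refine ⟨ud U (fun i => Real.sqrt (a i)), ?_⟩
  rw [(ud_herm U _).eq, ud_mul hU]
  congr 1
  ext i
  rw [Real.mul_self_sqrt (ha i)]

/-- Gentle measurement type estimate. -/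
lemma gentle {G ρ P Q : Matrix n n ℂ} (hG : G.PosSemidef) {c : ℝ} (hc : 0 ≤ c)
    (hGc : G ≤ (c : ℂ) • (1 : Matrix n n ℂ)) (hρ : ρ.PosSemidef)
    (hP : P.IsHermitian) (hPP : P * P = P) (hQ : Q.IsHermitian) (hQQ : Q * Q = Q)
    {t : ℝ} (ht : 0 < t) :
    (1 - t) * rtr (ρ * G) - c / t * (rtr (ρ * (1 - P)) + rtr (ρ * (1 - Q))) ≤
      rtr (Q * P * ρ * P * Q * G) := by
  obtain ⟨R, hρR⟩ := exists_factor hρ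
  have cyc : ∀ M : Matrix n n ℂ, rtr (ρ * M) = rtr (Rᴴ * M * R) := by
    intro M
    rw [hρR, Matrix.mul_assoc, rtr_comm]
  set D := (Q * P - 1) * R with hD
  have hX : rtr (Q * P * ρ * P * Q * G) = rtr ((R + D)ᴴ * G * (R + D)) := by
    have : R + D = Q * P * R := by rw [hD, Matrix.sub_mul, Matrix.one_mul]; abel
    rw [this, hρR, conjTranspose_mul, conjTranspose_mul, hP.eq, hQ.eq]
    calc rtr (Q * P * (R * Rᴴ) * P * Q * G) = rtr ((Q * P * R) * (Rᴴ * P * Q * G)) := by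
          simp only [Matrix.mul_assoc]
      _ = rtr ((Rᴴ * P * Q * G) * (Q * P * R)) := rtr_comm _ _
      _ = _ := by simp only [Matrix.mul_assoc]
  have hDD : rtr (Dᴴ * D) ≤ rtr (ρ * (1 - P)) + rtr (ρ * (1 - Q)) := by
    rw [cyc, cyc, ← rtr_add, ← Matrix.add_mul, ← Matrix.mul_add]
    apply rtr_mono
    rw [Matrix.le_iff]
    have h1 : (1 - Q).PosSemidef := by
      have := posSemidef_conjTranspose_mul_self (1 - Q)
      rw [conjTranspose_sub, conjTranspose_one, hQ.eq, Matrix.sub_mul, Matrix.mul_sub,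
        Matrix.mul_sub, hQQ] at this
      simpa using this
    have h2 := (h1.conjTranspose_mul_mul_same (P - 1)).conjTranspose_mul_mul_same R
    have e2 : Rᴴ * (1 - P + (1 - Q)) * R - Dᴴ * D =
        Rᴴ * ((P - 1)ᴴ * (1 - Q) * (P - 1)) * R := ?_
    · rw [e2]; exact h2
    rw [hD, conjTranspose_mul, conjTranspose_sub, conjTranspose_sub, conjTranspose_one,
      conjTranspose_mul, hP.eq, hQ.eq]
    have e : (1 - P + (1 - Q)) - (P * Q - 1) * (Q * P - 1) = (P - 1) * (1 - Q) * (P - 1) := by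
      have e1 : (P * Q - 1) * (Q * P - 1) = P * (Q * Q) * P - P * Q - Q * P + 1 := by noncomm_ring
      have e2 : (P - 1) * (1 - Q) * (P - 1) =
        P * P - P - P + 1 - P * Q * P + P * Q + Q * P - Q := by noncomm_ring
      rw [e1, e2, hQQ, hPP]
      noncomm_ring
    rw [← e]
    generalize 1 - P + (1 - Q) = Y
    simp only [Matrix.mul_sub, Matrix.sub_mul, Matrix.mul_assoc]
  have hGD : rtr (Dᴴ * G * D) ≤ c * rtr (Dᴴ * D) := by
    rw [← rtr_smul]
    apply rtr_mono
    rw [Matrix.le_iff]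
    have := (Matrix.le_iff.1 hGc).conjTranspose_mul_mul_same D
    rwa [Matrix.mul_sub, Matrix.sub_mul, Matrix.mul_smul, Matrix.smul_mul, Matrix.mul_one] at this
  have hq := rtr_nonneg (hG.conjTranspose_mul_mul_same ((t : ℂ) • R + D))
  have hDpos := rtr_nonneg (hG.conjTranspose_mul_mul_same D)
  have ex1 : rtr (((t : ℂ) • R + D)ᴴ * G * ((t : ℂ) • R + D)) =
      t ^ 2 * rtr (Rᴴ * G * R) + t * (rtr (Rᴴ * G * D) + rtr (Dᴴ * G * R)) + rtr (Dᴴ * G * D) := by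
    have : ((t : ℂ) • R + D)ᴴ = (t : ℂ) • Rᴴ + Dᴴ := by
      rw [conjTranspose_add, conjTranspose_smul]; simp
    rw [this]
    simp only [Matrix.add_mul, Matrix.mul_add, Matrix.smul_mul, Matrix.mul_smul, rtr_add, rtr_smul]
    ring
  have ex2 : rtr ((R + D)ᴴ * G * (R + D)) =
      rtr (Rᴴ * G * R) + (rtr (Rᴴ * G * D) + rtr (Dᴴ * G * R)) + rtr (Dᴴ * G * D) := by
    rw [conjTranspose_add]
    simp only [Matrix.add_mul, Matrix.mul_add, rtr_add]
    ring
  rw [hX, ex2, cyc G]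
  rw [ex1] at hq
  have h3 : c * rtr (Dᴴ * D) ≤ c * (rtr (ρ * (1 - P)) + rtr (ρ * (1 - Q))) :=
    mul_le_mul_of_nonneg_left hDD hc
  set a := rtr (Rᴴ * G * R)
  set b := rtr (Rᴴ * G * D) + rtr (Dᴴ * G * R)
  set d := rtr (Dᴴ * G * D)
  set e := rtr (ρ * (1 - P)) + rtr (ρ * (1 - Q))
  have h4 : d ≤ c * e := hGD.trans h3
  have h5 : 0 ≤ t * a + b + d / t := by
    have : t * a + b + d / t = (t ^ 2 * a + t * b + d) / t := by field_simp
    rw [this]; exact div_nonneg hq ht.le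
  have h6 : d / t ≤ c / t * e := by
    rw [div_mul_eq_mul_div]; exact div_le_div_of_nonneg_right h4 ht.le
  linarith

lemma ud_submatrix (e : m ≃ n) (U : Matrix n n ℂ) (a : n → ℝ) :
    (ud U a).submatrix e e = ud (U.submatrix e e) (a ∘ e) := by
  unfold ud
  rw [← submatrix_mul_equiv _ _ _ e, ← submatrix_mul_equiv _ _ _ e, submatrix_diagonal_equiv,
    conjTranspose_submatrix]
  rfl

lemma isU_submatrix (e : m ≃ n) {U : Matrix n n ℂ} (hU : IsU U) : IsU (U.submatrix e e) := by
  constructor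
  · rw [conjTranspose_submatrix, submatrix_mul_equiv, hU.1, submatrix_one_equiv]
  · rw [conjTranspose_submatrix, submatrix_mul_equiv, hU.2, submatrix_one_equiv]

lemma mlog_submatrix (e : m ≃ n) {A : Matrix n n ℂ} (hA : A.IsHermitian) :
    mlog (A.submatrix e e) = (mlog A).submatrix e e := by
  obtain ⟨U, a, hU, rfl⟩ := exists_ud hA
  rw [ud_submatrix, mlog_ud (isU_submatrix e hU), mlog_ud hU, ud_submatrix]
  rfl

lemma rtr_submatrix (e : m ≃ n) (A : Matrix n n ℂ) : rtr (A.submatrix e e) = rtr A := by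
  unfold rtr
  congr 1
  simp only [trace, diag_apply, submatrix_apply]
  exact e.sum_comp (fun i => A i i)

lemma relEntropy_submatrix (e : m ≃ n) {A B : Matrix n n ℂ} (hA : A.IsHermitian)
    (hB : B.IsHermitian) :
    relEntropy (A.submatrix e e) (B.submatrix e e) = relEntropy A B := by
  have hs : SuppLE (A.submatrix e e) (B.submatrix e e) ↔ SuppLE A B := by
    have hv : ∀ (C : Matrix n n ℂ) (v : n → ℂ),
        (C.submatrix e e).mulVec (v ∘ e) = 0 ↔ C.mulVec v = 0 := by
      intro C v
      rw [submatrix_mulVec_equiv]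
      have : (v ∘ e) ∘ e.symm = v := by ext i; simp
      rw [this]
      constructor
      · intro h
        ext i
        have := congrFun h (e.symm i)
        simpa using this
      · intro h; rw [h]; rfl
    constructor
    · intro h v hBv
      exact (hv A v).1 (h _ ((hv B v).2 hBv))
    · intro h v hBv
      have hvv : v = (v ∘ e.symm) ∘ e := by ext i; simp
      rw [hvv] at hBv ⊢
      exact (hv A _).2 (h _ ((hv B _).1 hBv))
  unfold relEntropy
  rw [mlog_submatrix e hA, mlog_submatrix e hB]
  have : A.submatrix e e * ((mlog A).submatrix e e - (mlog B).submatrix e e) =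
      (A * (mlog A - mlog B)).submatrix e e := by
    rw [← submatrix_mul_equiv _ _ _ e]; rfl
  rw [this, rtr_submatrix]
  by_cases h : SuppLE A B
  · rw [if_pos h, if_pos (hs.2 h)]
  · rw [if_neg h, if_neg (fun hx => h (hs.1 hx))]

/-- Complete positivity with arbitrary finite ancilla. -/
def IsCP (Φ : Matrix n n ℂ →ₗ[ℂ] Matrix m m ℂ) : Prop :=
  ∀ (k : Type) [Fintype k], ∀ M : Matrix (k × n) (k × n) ℂ, M.PosSemidef →
    (blockApply Φ M).PosSemidef

lemma IsQChannel.isCP {Φ : Matrix n n ℂ →ₗ[ℂ] Matrix m m ℂ} (h : IsQChannel Φ) : IsCP Φ := by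
  intro k _ M hM
  rcases isEmpty_or_nonempty k with hk | hk
  · have : blockApply Φ M = 0 := by
      ext p; exact (hk.false p.1).elim
    rw [this]; exact PosSemidef.zero
  · have e := Fintype.equivFin k
    have h1 := h.2 (Fintype.card k) Fintype.card_pos
      (M.submatrix (e.symm.prodCongr (Equiv.refl n)) (e.symm.prodCongr (Equiv.refl n)))
      (hM.submatrix _)
    have h2 := h1.submatrix (e.prodCongr (Equiv.refl m))
    convert h2 using 1
    ext p q
    simp [blockApply]

lemma IsCP.pos {Φ : Matrix n n ℂ →ₗ[ℂ] Matrix m m ℂ} (h : IsCP Φ) {M : Matrix n n ℂ}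
    (hM : M.PosSemidef) : (Φ M).PosSemidef := by
  have h1 := h Unit (M.submatrix Prod.snd Prod.snd) (hM.submatrix _)
  exact h1.submatrix (fun i => ((), i))

lemma IsCP.mono {Φ : Matrix n n ℂ →ₗ[ℂ] Matrix m m ℂ} (h : IsCP Φ) {M N : Matrix n n ℂ}
    (hM : M ≤ N) : Φ M ≤ Φ N := by
  rw [Matrix.le_iff, ← map_sub]
  exact h.pos (Matrix.le_iff.1 hM)

lemma isCP_id : IsCP (LinearMap.id : Matrix n n ℂ →ₗ[ℂ] Matrix n n ℂ) := by
  intro k _ M hM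
  exact hM

variable {n₁ m₁ n₂ m₂ : Type} [Fintype n₁] [DecidableEq n₁] [Fintype m₁] [DecidableEq m₁]
  [Fintype n₂] [DecidableEq n₂] [Fintype m₂] [DecidableEq m₂]

lemma IsCP.tensor {E₁ : Matrix n₁ n₁ ℂ →ₗ[ℂ] Matrix m₁ m₁ ℂ}
    {E₂ : Matrix n₂ n₂ ℂ →ₗ[ℂ] Matrix m₂ m₂ ℂ} (h₁ : IsCP E₁) (h₂ : IsCP E₂) :
    IsCP (tensorChannel E₁ E₂) := by
  intro k _ M hM
  have a1 := h₂ (k × n₁) (M.submatrix (fun p => (p.1.1, (p.1.2, p.2)))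
    (fun p => (p.1.1, (p.1.2, p.2)))) (hM.submatrix _)
  have a2 := h₁ (k × m₂) ((blockApply E₂ (M.submatrix
    (fun p : (k × n₁) × n₂ => (p.1.1, (p.1.2, p.2)))
    (fun p : (k × n₁) × n₂ => (p.1.1, (p.1.2, p.2))))).submatrix
      (fun p : (k × m₂) × n₁ => ((p.1.1, p.2), p.1.2))
      (fun p : (k × m₂) × n₁ => ((p.1.1, p.2), p.1.2))) (a1.submatrix _)
  have a3 := a2.submatrix (fun p : k × (m₁ × m₂) => ((p.1, p.2.2), p.2.1))
  exact a3

/-- `G` is the image of `H` under the adjoint of `Φ`. -/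
def IsAdj (Φ : Matrix n n ℂ →ₗ[ℂ] Matrix m m ℂ) (H : Matrix m m ℂ) (G : Matrix n n ℂ) : Prop :=
  ∀ X, (Φ X * H).trace = (X * G).trace

lemma exists_isAdj (Φ : Matrix n n ℂ →ₗ[ℂ] Matrix m m ℂ) (H : Matrix m m ℂ) :
    ∃ G, IsAdj Φ H G := by
  refine ⟨Matrix.of fun b a => (Φ (Matrix.single a b 1) * H).trace, fun X => ?_⟩
  have hlin : (Φ X * H).trace = ∑ a, ∑ b, X a b * (Φ (Matrix.single a b 1) * H).trace := by
    conv_lhs => rw [matrix_eq_sum_single X]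
    simp only [map_sum, Matrix.sum_mul, trace_sum]
    apply Finset.sum_congr rfl; intro a _
    apply Finset.sum_congr rfl; intro b _
    have : Matrix.single a b (X a b) = X a b • Matrix.single a b (1 : ℂ) := by
      rw [smul_single]; simp
    rw [this, map_smul, Matrix.smul_mul, trace_smul, smul_eq_mul]
  rw [hlin]
  simp only [trace, diag_apply, Matrix.mul_apply, of_apply]

lemma IsAdj.add {Φ : Matrix n n ℂ →ₗ[ℂ] Matrix m m ℂ} {H H' : Matrix m m ℂ}
    {G G' : Matrix n n ℂ} (h : IsAdj Φ H G) (h' : IsAdj Φ H' G') :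
    IsAdj Φ (H + H') (G + G') := by
  intro X
  rw [Matrix.mul_add, Matrix.mul_add, trace_add, trace_add, h X, h' X]

lemma tensorChannel_kron (E₁ : Matrix n₁ n₁ ℂ →ₗ[ℂ] Matrix m₁ m₁ ℂ)
    (E₂ : Matrix n₂ n₂ ℂ →ₗ[ℂ] Matrix m₂ m₂ ℂ) (A : Matrix n₁ n₁ ℂ) (B : Matrix n₂ n₂ ℂ) :
    tensorChannel E₁ E₂ (A ⊗ₖ B) = E₁ A ⊗ₖ E₂ B := by
  ext p q
  change E₁ (Matrix.of fun a b => E₂ (Matrix.of fun c d => A a b * B c d) p.2 q.2) p.1 q.1 =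
    E₁ A p.1 q.1 * E₂ B p.2 q.2
  have h1 : ∀ a b, (Matrix.of fun c d => A a b * B c d) = A a b • B := fun a b => rfl
  simp only [h1, map_smul]
  have h2 : (Matrix.of fun a b => (A a b • E₂ B) p.2 q.2) = E₂ B p.2 q.2 • A := by
    ext a b; simp [mul_comm]
  rw [h2, map_smul]
  simp [mul_comm]

lemma IsAdj.tensor {E₁ : Matrix n₁ n₁ ℂ →ₗ[ℂ] Matrix m₁ m₁ ℂ}
    {E₂ : Matrix n₂ n₂ ℂ →ₗ[ℂ] Matrix m₂ m₂ ℂ} {H₁ : Matrix m₁ m₁ ℂ} {H₂ : Matrix m₂ m₂ ℂ}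
    {G₁ : Matrix n₁ n₁ ℂ} {G₂ : Matrix n₂ n₂ ℂ} (h₁ : IsAdj E₁ H₁ G₁) (h₂ : IsAdj E₂ H₂ G₂) :
    IsAdj (tensorChannel E₁ E₂) (H₁ ⊗ₖ H₂) (G₁ ⊗ₖ G₂) := by
  intro X
  rw [matrix_eq_sum_single X]
  simp only [map_sum, Matrix.sum_mul, trace_sum]
  apply Finset.sum_congr rfl; intro a _
  apply Finset.sum_congr rfl; intro b _
  have : Matrix.single a b (X a b) =
      (Matrix.single a.1 b.1 (X a b)) ⊗ₖ (Matrix.single a.2 b.2 (1 : ℂ)) := by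
    rw [single_kronecker_single]; simp
  rw [this, tensorChannel_kron, ← mul_kronecker_mul, ← mul_kronecker_mul, trace_kronecker,
    trace_kronecker, h₁, h₂]

lemma IsAdj.psd {Φ : Matrix n n ℂ →ₗ[ℂ] Matrix m m ℂ} (hΦ : IsCP Φ) {H : Matrix m m ℂ}
    {G : Matrix n n ℂ} (h : IsAdj Φ H G) (hH : H.PosSemidef) : G.PosSemidef := by
  have key : ∀ x : n → ℂ, 0 ≤ star x ⬝ᵥ (G.mulVec x) := by
    intro x
    have h1 := h (vecMulVec x (star x))
    have h2 : (vecMulVec x (star x) * G).trace = star x ⬝ᵥ (G.mulVec x) := by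
      rw [vecMulVec_mul, trace_vecMulVec, dotProduct_comm, dotProduct_mulVec]
    rw [← h2, ← h1]
    obtain ⟨B', hB⟩ := exists_factor hH
    set B := B'ᴴ with hB'
    rw [← conjTranspose_conjTranspose B', ← hB', conjTranspose_conjTranspose] at hB
    have h3 := (hΦ.pos (posSemidef_vecMulVec_self_star x)).mul_mul_conjTranspose_same B
    have h4 := h3.trace_nonneg
    rw [hB', conjTranspose_conjTranspose, ← hB'] at h4
    rwa [hB, ← Matrix.mul_assoc, trace_mul_comm, ← Matrix.mul_assoc]
  have hH' : G.IsHermitian := by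
    rw [← isSymmetric_toEuclideanLin_iff, LinearMap.isSymmetric_iff_inner_map_self_real]
    intro v
    have := key (WithLp.ofLp v)
    have h2 : inner ℂ ((toEuclideanLin G) v) v = star (star v.ofLp ⬝ᵥ G *ᵥ v.ofLp) := by
      rw [EuclideanSpace.inner_eq_star_dotProduct, ofLp_toEuclideanLin_apply,
        dotProduct_comm, star_dotProduct]
    rw [h2]
    have h3 : star (star v.ofLp ⬝ᵥ G *ᵥ v.ofLp) = star v.ofLp ⬝ᵥ G *ᵥ v.ofLp :=
      (IsSelfAdjoint.of_nonneg this).star_eq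
    rw [h3]
    exact h3
  exact PosSemidef.of_dotProduct_mulVec_nonneg hH' key

end Tools

section Powers
open scoped MatrixOrder
open Matrix

variable {n m : Type} [Fintype n] [DecidableEq n] [Fintype m] [DecidableEq m]

/-- product of a function along a multi-index -/
def tprodF (a : n → ℝ) : ∀ k : ℕ, tpow n k → ℝ
  | 0 => fun _ => 1
  | (k+1) => fun p => tprodF a k p.1 * a p.2

/-- sum of a function along a multi-index -/
def tsumF (a : n → ℝ) : ∀ k : ℕ, tpow n k → ℝ
  | 0 => fun _ => 0
  | (k+1) => fun p => tsumF a k p.1 + a p.2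

/-- sum of local operators -/
def lsum (H : Matrix n n ℂ) : ∀ k : ℕ, Matrix (tpow n k) (tpow n k) ℂ
  | 0 => 0
  | (k+1) => lsum H k ⊗ₖ (1 : Matrix n n ℂ) + (1 : Matrix (tpow n k) (tpow n k) ℂ) ⊗ₖ H

lemma tpowMat_mul (A B : Matrix n n ℂ) (k : ℕ) :
    tpowMat (A * B) k = tpowMat A k * tpowMat B k := by
  induction k with
  | zero => exact (Matrix.one_mul (1 : Matrix (tpow n 0) (tpow n 0) ℂ)).symm
  | succ k ih =>
    have : (tpowMat (A * B) k) ⊗ₖ (A * B) = (tpowMat A k ⊗ₖ A) * (tpowMat B k ⊗ₖ B) := by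
      rw [ih, mul_kronecker_mul]
    exact this

lemma tpowMat_one (k : ℕ) : tpowMat (1 : Matrix n n ℂ) k = 1 := by
  induction k with
  | zero => rfl
  | succ k ih =>
    have : (tpowMat (1 : Matrix n n ℂ) k) ⊗ₖ (1 : Matrix n n ℂ) = 1 := by
      rw [ih, one_kronecker_one]
    exact this

lemma tpowMat_conjTranspose (A : Matrix n n ℂ) (k : ℕ) :
    tpowMat Aᴴ k = (tpowMat A k)ᴴ := by
  induction k with
  | zero => exact (conjTranspose_one (n := tpow n 0) (α := ℂ)).symm
  | succ k ih =>
    have : (tpowMat Aᴴ k) ⊗ₖ Aᴴ = (tpowMat A k ⊗ₖ A)ᴴ := by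
      rw [ih, conjTranspose_kronecker]
    exact this

lemma isU_tpow {U : Matrix n n ℂ} (hU : IsU U) (k : ℕ) : IsU (tpowMat U k) := by
  constructor
  · rw [← tpowMat_conjTranspose, ← tpowMat_mul, hU.1, tpowMat_one]
  · rw [← tpowMat_conjTranspose, ← tpowMat_mul, hU.2, tpowMat_one]

lemma tpowMat_diag (a : n → ℝ) (k : ℕ) :
    tpowMat (diagonal fun i => (a i : ℂ)) k = diagonal fun i => (tprodF a k i : ℂ) := by
  induction k with
  | zero =>
    have : (1 : Matrix (tpow n 0) (tpow n 0) ℂ) = diagonal fun i => ((1 : ℝ) : ℂ) := by simp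
    exact this
  | succ k ih =>
    have : (tpowMat (diagonal fun i => (a i : ℂ)) k) ⊗ₖ (diagonal fun i => (a i : ℂ)) =
      diagonal fun p : tpow n k × n => ((tprodF a k p.1 * a p.2 : ℝ) : ℂ) := by
      rw [ih, diagonal_kronecker_diagonal]
      simp
    exact this

lemma tpowMat_ud (U : Matrix n n ℂ) (a : n → ℝ) (k : ℕ) :
    tpowMat (ud U a) k = ud (tpowMat U k) (tprodF a k) := by
  unfold ud
  rw [tpowMat_mul, tpowMat_mul, tpowMat_diag, tpowMat_conjTranspose]

lemma lsum_conj (U : Matrix n n ℂ) (hU : IsU U) (H : Matrix n n ℂ) (k : ℕ) :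
    lsum (U * H * Uᴴ) k = tpowMat U k * lsum H k * (tpowMat U k)ᴴ := by
  induction k with
  | zero =>
    have : (0 : Matrix (tpow n 0) (tpow n 0) ℂ) = tpowMat U 0 * 0 * (tpowMat U 0)ᴴ := by simp
    exact this
  | succ k ih =>
    have : lsum (U * H * Uᴴ) k ⊗ₖ (1 : Matrix n n ℂ) +
        (1 : Matrix (tpow n k) (tpow n k) ℂ) ⊗ₖ (U * H * Uᴴ) =
      (tpowMat U k ⊗ₖ U) * (lsum H k ⊗ₖ (1 : Matrix n n ℂ) +
        (1 : Matrix (tpow n k) (tpow n k) ℂ) ⊗ₖ H) * (tpowMat U k ⊗ₖ U)ᴴ := by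
      rw [ih, conjTranspose_kronecker, Matrix.mul_add, Matrix.add_mul, ← mul_kronecker_mul,
        ← mul_kronecker_mul, ← mul_kronecker_mul, ← mul_kronecker_mul, Matrix.mul_one,
        Matrix.mul_one, hU.2, (isU_tpow hU k).2]
    exact this

lemma lsum_diag (a : n → ℝ) (k : ℕ) :
    lsum (diagonal fun i => (a i : ℂ)) k = diagonal fun i => (tsumF a k i : ℂ) := by
  induction k with
  | zero =>
    have : (0 : Matrix (tpow n 0) (tpow n 0) ℂ) = diagonal fun i => ((0 : ℝ) : ℂ) := by simp
    exact this
  | succ k ih =>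
    have : (lsum (diagonal fun i => (a i : ℂ)) k) ⊗ₖ (1 : Matrix n n ℂ) +
        (1 : Matrix (tpow n k) (tpow n k) ℂ) ⊗ₖ (diagonal fun i => (a i : ℂ)) =
      diagonal fun p : tpow n k × n => ((tsumF a k p.1 + a p.2 : ℝ) : ℂ) := by
      rw [ih, ← diagonal_one, ← diagonal_one, diagonal_kronecker_diagonal,
        diagonal_kronecker_diagonal, diagonal_add]
      simp
    exact this

lemma lsum_ud {U : Matrix n n ℂ} (hU : IsU U) (a : n → ℝ) (k : ℕ) :
    lsum (ud U a) k = ud (tpowMat U k) (tsumF a k) := by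
  unfold ud
  rw [lsum_conj U hU, lsum_diag]

lemma lsum_add (H H' : Matrix n n ℂ) (k : ℕ) : lsum (H + H') k = lsum H k + lsum H' k := by
  induction k with
  | zero => exact (add_zero (0 : Matrix (tpow n 0) (tpow n 0) ℂ)).symm
  | succ k ih =>
    have : lsum (H + H') k ⊗ₖ (1 : Matrix n n ℂ) +
        (1 : Matrix (tpow n k) (tpow n k) ℂ) ⊗ₖ (H + H') =
       (lsum H k ⊗ₖ (1 : Matrix n n ℂ) + (1 : Matrix (tpow n k) (tpow n k) ℂ) ⊗ₖ H) +
       (lsum H' k ⊗ₖ (1 : Matrix n n ℂ) + (1 : Matrix (tpow n k) (tpow n k) ℂ) ⊗ₖ H') := by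
      rw [ih, add_kronecker, kronecker_add]; abel
    exact this

lemma lsum_const (c : ℝ) (k : ℕ) :
    lsum ((c : ℂ) • (1 : Matrix n n ℂ)) k = ((k * c : ℝ) : ℂ) • 1 := by
  induction k with
  | zero =>
    have : (0 : Matrix (tpow n 0) (tpow n 0) ℂ) = (((0 : ℕ) * c : ℝ) : ℂ) • 1 := by simp
    exact this
  | succ k ih =>
    have : lsum ((c : ℂ) • (1 : Matrix n n ℂ)) k ⊗ₖ (1 : Matrix n n ℂ) +
        (1 : Matrix (tpow n k) (tpow n k) ℂ) ⊗ₖ ((c : ℂ) • (1 : Matrix n n ℂ)) =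
        (((k + 1 : ℕ) * c : ℝ) : ℂ) • (1 : Matrix (tpow n k × n) (tpow n k × n) ℂ) := by
      rw [ih, smul_kronecker, kronecker_smul, one_kronecker_one, ← add_smul]
      congr 1
      push_cast; ring
    exact this

lemma lsum_psd {H : Matrix n n ℂ} (hH : H.PosSemidef) (k : ℕ) : (lsum H k).PosSemidef := by
  induction k with
  | zero => exact PosSemidef.zero
  | succ k ih =>
    exact (ih.kronecker PosSemidef.one).add (PosSemidef.one.kronecker hH)

lemma lsum_le {H : Matrix n n ℂ} {c : ℝ} (h : H ≤ (c : ℂ) • (1 : Matrix n n ℂ)) (k : ℕ) :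
    lsum H k ≤ ((k * c : ℝ) : ℂ) • 1 := by
  have h1 := lsum_psd (Matrix.le_iff.1 h) k
  have h2 := lsum_add H ((c : ℂ) • (1 : Matrix n n ℂ) - H) k
  rw [add_sub_cancel, lsum_const] at h2
  rw [Matrix.le_iff, h2]
  simpa using h1

lemma trace_tpowMat {ρ : Matrix n n ℂ} (h : ρ.trace = 1) (k : ℕ) : (tpowMat ρ k).trace = 1 := by
  induction k with
  | zero =>
    have : (1 : Matrix PUnit PUnit ℂ).trace = 1 := by simp
    exact this
  | succ k ih =>
    have : (tpowMat ρ k ⊗ₖ ρ).trace = 1 := by rw [trace_kronecker, ih, h, one_mul]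
    exact this

lemma tpowMat_psd {ρ : Matrix n n ℂ} (h : ρ.PosSemidef) (k : ℕ) : (tpowMat ρ k).PosSemidef := by
  induction k with
  | zero => exact PosSemidef.one
  | succ k ih => exact ih.kronecker h

lemma tpowMat_posDef {ρ : Matrix n n ℂ} (h : ρ.PosDef) (k : ℕ) : (tpowMat ρ k).PosDef := by
  induction k with
  | zero => exact PosDef.one
  | succ k ih => exact ih.kronecker h

lemma trace_lsum {ρ : Matrix n n ℂ} (h : ρ.trace = 1) (G : Matrix n n ℂ) (k : ℕ) :
    (tpowMat ρ k * lsum G k).trace = k * (ρ * G).trace := by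
  induction k with
  | zero =>
    have : (tpowMat ρ 0 * 0).trace = ((0 : ℕ) : ℂ) * (ρ * G).trace := by simp
    exact this
  | succ k ih =>
    have : ((tpowMat ρ k ⊗ₖ ρ) * (lsum G k ⊗ₖ (1 : Matrix n n ℂ) +
        (1 : Matrix (tpow n k) (tpow n k) ℂ) ⊗ₖ G)).trace = ((k + 1 : ℕ) : ℂ) * (ρ * G).trace := by
      rw [Matrix.mul_add, trace_add, ← mul_kronecker_mul, ← mul_kronecker_mul, trace_kronecker,
        trace_kronecker, ih, Matrix.mul_one, Matrix.mul_one, h, trace_tpowMat h]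
      push_cast; ring
    exact this

lemma tpowChannel_tpowMat (E : Matrix n n ℂ →ₗ[ℂ] Matrix m m ℂ) (ρ : Matrix n n ℂ) (k : ℕ) :
    tpowChannel E k (tpowMat ρ k) = tpowMat (E ρ) k := by
  induction k with
  | zero => rfl
  | succ k ih =>
    have : tensorChannel (tpowChannel E k) E (tpowMat ρ k ⊗ₖ ρ) = tpowMat (E ρ) k ⊗ₖ E ρ := by
      rw [tensorChannel_kron, ih]
    exact this

lemma tpowChannel_cp {E : Matrix n n ℂ →ₗ[ℂ] Matrix m m ℂ} (hE : IsCP E) (k : ℕ) :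
    IsCP (tpowChannel E k) := by
  induction k with
  | zero => exact isCP_id (n := PUnit)
  | succ k ih => exact ih.tensor hE

lemma tpowChannel_adj_one {E : Matrix n n ℂ →ₗ[ℂ] Matrix m m ℂ} (hE : IsAdj E 1 1) (k : ℕ) :
    IsAdj (tpowChannel E k) 1 1 := by
  induction k with
  | zero => exact fun X => rfl
  | succ k ih =>
    have h := ih.tensor hE
    rw [one_kronecker_one, one_kronecker_one] at h
    exact h

lemma tpowChannel_adj {E : Matrix n n ℂ →ₗ[ℂ] Matrix m m ℂ} (hE : IsAdj E 1 1)
    {H : Matrix m m ℂ} {G : Matrix n n ℂ} (h : IsAdj E H G) (k : ℕ) :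
    IsAdj (tpowChannel E k) (lsum H k) (lsum G k) := by
  induction k with
  | zero => exact fun X => rfl
  | succ k ih => exact (ih.tensor hE).add ((tpowChannel_adj_one hE k).tensor h)

lemma tprodF_nonneg {a : n → ℝ} (ha : ∀ i, 0 ≤ a i) (k : ℕ) (I : tpow n k) :
    0 ≤ tprodF a k I := by
  induction k with
  | zero => exact zero_le_one
  | succ k ih => exact mul_nonneg (ih I.1) (ha I.2)

lemma tprodF_ne {a b : n → ℝ} (h : ∀ i, a i ≠ 0 → b i ≠ 0) (k : ℕ) (I : tpow n k)
    (hI : tprodF a k I ≠ 0) : tprodF b k I ≠ 0 := by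
  induction k with
  | zero => exact one_ne_zero
  | succ k ih =>
    have hI' : tprodF a k I.1 * a I.2 ≠ 0 := hI
    exact mul_ne_zero (ih I.1 (left_ne_zero_of_mul hI')) (h _ (right_ne_zero_of_mul hI'))

lemma logb_tprodF {a : n → ℝ} (k : ℕ) (I : tpow n k) (hI : tprodF a k I ≠ 0) :
    Real.logb 2 (tprodF a k I) = tsumF (fun i => Real.logb 2 (a i)) k I := by
  induction k with
  | zero => exact Real.logb_one
  | succ k ih =>
    have hI' : tprodF a k I.1 * a I.2 ≠ 0 := hI
    have : Real.logb 2 (tprodF a k I.1 * a I.2) =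
        tsumF (fun i => Real.logb 2 (a i)) k I.1 + Real.logb 2 (a I.2) := by
      rw [Real.logb_mul (left_ne_zero_of_mul hI') (right_ne_zero_of_mul hI'),
        ih I.1 (left_ne_zero_of_mul hI')]
    exact this

lemma tprodF_pert {a : n → ℝ} (ha : ∀ i, 0 ≤ a i) {η : ℝ} (hη : 0 < η) (k : ℕ)
    (I : tpow n (k + 1)) :
    tprodF a (k + 1) I + η ^ (k + 1) ≤ tprodF (fun i => a i + η) (k + 1) I := by
  induction k with
  | zero =>
    have : 1 * a I.2 + η ^ (0 + 1) ≤ 1 * (a I.2 + η) := by simp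
    exact this
  | succ k ih =>
    have : tprodF a (k + 1) I.1 * a I.2 + η ^ (k + 1 + 1) ≤
        tprodF (fun i => a i + η) (k + 1) I.1 * (a I.2 + η) := by
      have h1 := mul_le_mul_of_nonneg_right (ih I.1) (add_nonneg (ha I.2) hη.le)
      have h2 := mul_nonneg (tprodF_nonneg ha (k + 1) I.1) hη.le
      have h3 := mul_nonneg (pow_nonneg hη.le (k + 1)) (ha I.2)
      rw [pow_succ]
      linarith
    exact this

lemma tprodF_pos {a : n → ℝ} (ha : ∀ i, 0 < a i) (k : ℕ) (I : tpow n k) :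
    0 < tprodF a k I := by
  induction k with
  | zero => exact zero_lt_one
  | succ k ih => exact mul_pos (ih I.1) (ha I.2)

lemma sum_tpow_succ (k : ℕ) (f : tpow n (k + 1) → ℝ) :
    ∑ I, f I = ∑ I : tpow n k, ∑ i : n, f (I, i) :=
  Fintype.sum_prod_type (f := fun p : tpow n k × n => f p)

lemma moments {p X : n → ℝ} {μ v : ℝ} (hp1 : ∑ i, p i = 1) (hμ : ∑ i, p i * X i = μ)
    (hv : ∑ i, p i * (X i - μ) ^ 2 = v) (k : ℕ) :
    ∑ I, tprodF p k I = 1 ∧ ∑ I, tprodF p k I * (tsumF X k I - k * μ) = 0 ∧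
      ∑ I, tprodF p k I * (tsumF X k I - k * μ) ^ 2 = k * v := by
  induction k with
  | zero =>
    have h : ∀ f : tpow n 0 → ℝ, ∑ I, f I = f PUnit.unit :=
      fun f => Fintype.sum_unique (f := fun p : PUnit => f p)
    refine ⟨?_, ?_, ?_⟩ <;> rw [h] <;> simp [tprodF, tsumF]
  | succ k ih =>
    obtain ⟨h0, h1, h2⟩ := ih
    have e0 : ∑ i, p i * (X i - μ) = 0 := by
      simp only [mul_sub, Finset.sum_sub_distrib, ← Finset.sum_mul, hp1, hμ]; ring
    refine ⟨?_, ?_, ?_⟩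
    · rw [sum_tpow_succ]
      change ∑ I : tpow n k, ∑ i : n, tprodF p k I * p i = 1
      simp only [← Finset.mul_sum, hp1, mul_one, h0]
    · rw [sum_tpow_succ]
      change ∑ I : tpow n k, ∑ i : n,
        (tprodF p k I * p i) * ((tsumF X k I + X i) - ((k + 1 : ℕ) : ℝ) * μ) = 0
      have : ∀ (I : tpow n k) (i : n),
          (tprodF p k I * p i) * ((tsumF X k I + X i) - ((k + 1 : ℕ) : ℝ) * μ) =
          (tprodF p k I * (tsumF X k I - k * μ)) * p i + tprodF p k I * (p i * (X i - μ)) := by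
        intro I i; push_cast; ring
      simp only [this, Finset.sum_add_distrib, ← Finset.mul_sum, hp1, e0, mul_one, h1, mul_zero,
        Finset.sum_const_zero, add_zero]
    · rw [sum_tpow_succ]
      change ∑ I : tpow n k, ∑ i : n,
        (tprodF p k I * p i) * ((tsumF X k I + X i) - ((k + 1 : ℕ) : ℝ) * μ) ^ 2 =
          ((k + 1 : ℕ) : ℝ) * v
      have : ∀ (I : tpow n k) (i : n),
          (tprodF p k I * p i) * ((tsumF X k I + X i) - ((k + 1 : ℕ) : ℝ) * μ) ^ 2 =
          (tprodF p k I * (tsumF X k I - k * μ) ^ 2) * p i +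
            (2 * (tprodF p k I * (tsumF X k I - k * μ))) * (p i * (X i - μ)) +
            tprodF p k I * (p i * (X i - μ) ^ 2) := by
        intro I i; push_cast; ring
      simp only [this, Finset.sum_add_distrib, ← Finset.mul_sum, hp1, e0, mul_one, h2, mul_zero,
        Finset.sum_const_zero, add_zero, hv, ← Finset.sum_mul, h0]
      push_cast; ring

open Classical in
lemma cheb {p X : n → ℝ} {μ v : ℝ} (hp : ∀ i, 0 ≤ p i) (hp1 : ∑ i, p i = 1)
    (hμ : ∑ i, p i * X i = μ) (hv : ∑ i, p i * (X i - μ) ^ 2 = v) {k : ℕ} (hk : 1 ≤ k)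
    {δ : ℝ} (hδ : 0 < δ) (good : tpow n k → Prop)
    (hb : ∀ I, ¬ good I → tprodF p k I ≠ 0 → k * δ ≤ |tsumF X k I - k * μ|) :
    ∑ I, (1 - if good I then (1 : ℝ) else 0) * tprodF p k I ≤ v / δ ^ 2 / k := by
  have hk0 : (0 : ℝ) < k := by exact_mod_cast hk
  have h2 := (moments hp1 hμ hv k).2.2
  have h3 : ∑ I, (1 - if good I then (1 : ℝ) else 0) * tprodF p k I ≤
      ∑ I, (tprodF p k I * (tsumF X k I - k * μ) ^ 2) / (k * δ) ^ 2 := by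
    apply Finset.sum_le_sum
    intro I _
    have hn := tprodF_nonneg hp k I
    split_ifs with hg
    · simp only [sub_self, zero_mul]; positivity
    · by_cases h0 : tprodF p k I = 0
      · rw [h0]; simp
      · have h4 := hb I hg h0
        rw [le_div_iff₀ (by positivity)]
        have h5 : (k * δ) ^ 2 ≤ (tsumF X k I - k * μ) ^ 2 := by
          rw [← sq_abs (tsumF X k I - k * μ)]
          exact pow_le_pow_left₀ (by positivity) h4 2
        have := mul_le_mul_of_nonneg_left h5 hn
        linarith
  rw [← Finset.sum_div, h2] at h3
  refine h3.trans (le_of_eq ?_)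
  field_simp

open Classical in
/-- Typical projections. -/
lemma typical {ρ σ : Matrix n n ℂ} (hρ : IsState ρ) (hσ : IsState σ) (hs : SuppLE ρ σ) :
    ∃ v : ℝ, ∀ δ : ℝ, 0 < δ → ∀ k : ℕ, 1 ≤ k →
      ∃ P Q : Matrix (tpow n k) (tpow n k) ℂ, P.IsHermitian ∧ P * P = P ∧ Q.IsHermitian ∧
        Q * Q = Q ∧ rtr (tpowMat ρ k * (1 - P)) + rtr (tpowMat ρ k * (1 - Q)) ≤ v / δ ^ 2 / k ∧
        Q * P * tpowMat ρ k * P * Q ≤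
          (((2 : ℝ) ^ (k * (rtr (ρ * (mlog ρ - mlog σ)) + 2 * δ)) : ℝ) : ℂ) • tpowMat σ k := by
  obtain ⟨U, r, hU, hρ', hr⟩ := exists_ud_psd hρ.1
  obtain ⟨V, s, hV, hσ', hsn⟩ := exists_ud_psd hσ.1
  set q : n → ℝ := fun j => ((Vᴴ * ρ * V) j j).re with hq
  have hqn : ∀ j, 0 ≤ q j := fun j => conj_diag_nonneg hρ.1 V j
  have hq1 : ∑ j, q j = 1 := by
    rw [hq, sum_conj_diag hV, rtr, hρ.2]; simp
  have hrq : ∀ j, r j = ((Uᴴ * ρ * U) j j).re := by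
    intro j; rw [hρ', ud_conj hU]; simp
  have hr1 : ∑ j, r j = 1 := by
    simp only [hrq]
    rw [sum_conj_diag hU, rtr, hρ.2]; simp
  have hqs : ∀ j, q j ≠ 0 → s j ≠ 0 := by
    intro j hj h0
    apply hj
    rw [hσ'] at hs
    rw [hq]
    simp only [supp_diag hV hs h0, Complex.zero_re]
  set X : n → ℝ := fun i => Real.logb 2 (r i) with hX
  set Y : n → ℝ := fun i => Real.logb 2 (s i) with hY
  set μ := ∑ i, r i * X i with hμ
  set ν := ∑ i, q i * Y i with hν
  have hD : rtr (ρ * (mlog ρ - mlog σ)) = μ - ν := by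
    rw [Matrix.mul_sub, rtr_sub, hσ', mlog_ud hV, rtr_mul_ud]
    have : mlog ρ = ud U X := by rw [hρ', mlog_ud hU]
    rw [this, rtr_mul_ud]
    simp only [← hrq]
    rw [hμ, hν]
    congr 1
    · exact Finset.sum_congr rfl fun i _ => mul_comm _ _
    · exact Finset.sum_congr rfl fun i _ => mul_comm _ _
  refine ⟨(∑ i, r i * (X i - μ) ^ 2) + (∑ i, q i * (Y i - ν) ^ 2), ?_⟩
  intro δ hδ k hk
  have hk0 : (0 : ℝ) < k := by exact_mod_cast hk
  set gP : tpow n k → Prop := fun I => tprodF r k I ≤ (2 : ℝ) ^ (k * (μ + δ)) with hgP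
  set gQ : tpow n k → Prop := fun I => (2 : ℝ) ^ (k * (ν - δ)) ≤ tprodF s k I with hgQ
  have hUk := isU_tpow hU k
  have hVk := isU_tpow hV k
  set P := ud (tpowMat U k) (fun I => if gP I then (1 : ℝ) else 0) with hP
  set Q := ud (tpowMat V k) (fun I => if gQ I then (1 : ℝ) else 0) with hQ
  have hPP : P * P = P := by
    rw [hP, ud_mul hUk]; congr 1; ext I; split_ifs <;> simp
  have hQQ : Q * Q = Q := by
    rw [hQ, ud_mul hVk]; congr 1; ext I; split_ifs <;> simp
  have hρk : tpowMat ρ k = ud (tpowMat U k) (tprodF r k) := by rw [hρ', tpowMat_ud]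
  have hσk : tpowMat σ k = ud (tpowMat V k) (tprodF s k) := by rw [hσ', tpowMat_ud]
  have one_sub : ∀ {W : Matrix (tpow n k) (tpow n k) ℂ} (hW : IsU W) (a : tpow n k → ℝ),
      1 - ud W a = ud W (fun I => 1 - a I) := by
    intro W hW a
    rw [← ud_sub, ud_const hW]; simp
  refine ⟨P, Q, ud_herm _ _, hPP, ud_herm _ _, hQQ, ?_, ?_⟩
  · have h1 : rtr (tpowMat ρ k * (1 - P)) ≤ (∑ i, r i * (X i - μ) ^ 2) / δ ^ 2 / k := by
      have hc := cheb hr hr1 hμ.symm rfl hk hδ gP (by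
        intro I hI h0
        have hI' : (2 : ℝ) ^ (k * (μ + δ)) < tprodF r k I := not_le.1 hI
        have h5 := Real.logb_lt_logb one_lt_two (by positivity) hI'
        rw [Real.logb_rpow (by norm_num) (by norm_num), logb_tprodF k I h0] at h5
        refine le_trans ?_ (le_abs_self _)
        rw [hX]; linarith)
      refine le_trans (le_of_eq ?_) hc
      rw [hP, one_sub hUk, rtr_mul_ud, hρk, ud_conj hUk]
      simp only [diagonal_apply_eq, Complex.ofReal_re]
    have h2 : rtr (tpowMat ρ k * (1 - Q)) ≤ (∑ i, q i * (Y i - ν) ^ 2) / δ ^ 2 / k := by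
      have hc := cheb hqn hq1 hν.symm rfl hk hδ gQ (by
        intro I hI h0
        have hI' : tprodF s k I < (2 : ℝ) ^ (k * (ν - δ)) := not_le.1 hI
        have h0' := tprodF_ne hqs k I h0
        have hpos := lt_of_le_of_ne (tprodF_nonneg hsn k I) h0'.symm
        have h5 := Real.logb_lt_logb one_lt_two hpos hI'
        rw [Real.logb_rpow (by norm_num) (by norm_num), logb_tprodF k I h0'] at h5
        refine le_trans ?_ (neg_le_abs _)
        rw [hY]; linarith)
      refine le_trans (le_of_eq ?_) hc
      rw [hQ, one_sub hVk, rtr_mul_ud]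
      apply Finset.sum_congr rfl
      intro I _
      congr 1
      rw [← tpowMat_conjTranspose, ← tpowMat_mul, ← tpowMat_mul]
      have hh : (Vᴴ * ρ * V).PosSemidef := hρ.1.conjTranspose_mul_mul_same V
      have gen : ∀ (A : Matrix n n ℂ) (_ : ∀ i, (A i i).im = 0) (k : ℕ) (I : tpow n k),
          tpowMat A k I I = (tprodF (fun j => (A j j).re) k I : ℂ) := by
        intro A hA k
        induction k with
        | zero =>
          intro I
          have : (1 : Matrix (tpow n 0) (tpow n 0) ℂ) I I = ((1 : ℝ) : ℂ) := by simp
          exact this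
        | succ k ih =>
          intro I
          have : tpowMat A k I.1 I.1 * A I.2 I.2 =
            ((tprodF (fun j => (A j j).re) k I.1 * (A I.2 I.2).re : ℝ) : ℂ) := by
            rw [ih I.1, Complex.ofReal_mul]
            congr 1
            apply Complex.ext <;> simp [hA]
          exact this
      rw [gen _ (fun i => ((Complex.le_def.1 (hh.diag_nonneg (i := i))).2).symm) k I]
      simp [hq]
    rw [add_div, add_div]
    exact add_le_add h1 h2
  · have h1 : P * tpowMat ρ k * P ≤ (((2 : ℝ) ^ (k * (μ + δ)) : ℝ) : ℂ) • 1 := by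
      rw [hρk, hP, ud_mul hUk, ud_mul hUk, ← ud_const hUk]
      apply ud_le
      intro I
      split_ifs with hI
      · simpa using hI
      · simp only [zero_mul]; positivity
    have h2 : Q * P * tpowMat ρ k * P * Q ≤ (((2 : ℝ) ^ (k * (μ + δ)) : ℝ) : ℂ) • Q := by
      rw [Matrix.le_iff]
      have := (Matrix.le_iff.1 h1).conjTranspose_mul_mul_same Q
      rw [(ud_herm _ _ : Q.IsHermitian).eq, Matrix.mul_sub, Matrix.sub_mul, Matrix.mul_smul,
        Matrix.smul_mul, Matrix.mul_one, hQQ] at this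
      simpa only [Matrix.mul_assoc] using this
    refine h2.trans ?_
    rw [hσk, hQ, ud_smul, ud_smul]
    apply ud_le
    intro I
    have hexp : (2 : ℝ) ^ (k * (rtr (ρ * (mlog ρ - mlog σ)) + 2 * δ)) =
        (2 : ℝ) ^ (k * (μ + δ)) * (2 : ℝ) ^ (-(k * (ν - δ))) := by
      rw [← Real.rpow_add (by norm_num), hD]
      congr 1; ring
    rw [hexp, mul_assoc]
    apply mul_le_mul_of_nonneg_left _ (by positivity)
    split_ifs with hI
    · have hI' : (2 : ℝ) ^ (k * (ν - δ)) ≤ tprodF s k I := hI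
      rw [Real.rpow_neg (by norm_num), ← div_eq_inv_mul, le_div_iff₀ (by positivity), one_mul]
      exact hI'
    · exact mul_nonneg (by positivity) (tprodF_nonneg hsn k I)

end Powers

section Main
open scoped MatrixOrder
open Matrix

variable {n m : Type} [Fintype n] [DecidableEq n] [Fintype m] [DecidableEq m]

lemma exists_ud_pd {A : Matrix n n ℂ} (hA : A.PosDef) :
    ∃ U a, IsU U ∧ A = ud U a ∧ ∀ i, 0 < a i := by
  obtain ⟨U, a, hU, rfl⟩ := exists_ud hA.1
  refine ⟨U, a, hU, rfl, fun i => ?_⟩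
  have hinj : Function.Injective U.mulVec := by
    intro x y hxy
    have := congrArg (Uᴴ.mulVec) hxy
    simpa [mulVec_mulVec, hU.1] using this
  have h1 := hA.conjTranspose_mul_mul_same hinj
  rw [ud_conj hU, posDef_diagonal_iff] at h1
  simpa using h1 i

lemma ud_pd {U : Matrix n n ℂ} (hU : IsU U) {a : n → ℝ} (ha : ∀ i, 0 < a i) :
    (ud U a).PosDef := by
  unfold ud
  apply PosDef.mul_mul_conjTranspose_same
  · rw [posDef_diagonal_iff]
    intro i; simpa using ha i
  · intro x y hxy
    have := congrArg (fun z => Matrix.vecMul z Uᴴ) hxy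
    simpa [vecMul_vecMul, hU.2] using this

lemma mlog_tpow {A : Matrix n n ℂ} (hA : A.PosDef) (k : ℕ) :
    mlog (tpowMat A k) = lsum (mlog A) k := by
  obtain ⟨U, a, hU, rfl, ha⟩ := exists_ud_pd hA
  rw [tpowMat_ud, mlog_ud (isU_tpow hU k), mlog_ud hU, lsum_ud hU]
  congr 1
  funext I
  exact logb_tprodF k I (tprodF_pos ha k I).ne'

lemma mlog_smul {A : Matrix n n ℂ} (hA : A.PosDef) {c : ℝ} (hc : 0 < c) :
    mlog ((c : ℂ) • A) = ((Real.logb 2 c : ℝ) : ℂ) • (1 : Matrix n n ℂ) + mlog A := by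
  obtain ⟨U, a, hU, rfl, ha⟩ := exists_ud_pd hA
  rw [ud_smul, mlog_ud hU, mlog_ud hU, ← ud_const hU, ud_add]
  congr 1
  funext i
  exact Real.logb_mul hc.ne' (ha i).ne'

lemma pert_pd {A : Matrix n n ℂ} (hA : A.PosSemidef) {η : ℝ} (hη : 0 < η) :
    (A + (η : ℂ) • (1 : Matrix n n ℂ)).PosDef := by
  obtain ⟨U, a, hU, rfl, ha⟩ := exists_ud_psd hA
  rw [← ud_const hU, ud_add]
  exact ud_pd hU fun i => add_pos_of_nonneg_of_pos (ha i) hη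

lemma tpow_pert {A : Matrix n n ℂ} (hA : A.PosSemidef) {η : ℝ} (hη : 0 < η) {k : ℕ} (hk : 1 ≤ k) :
    tpowMat A k + ((η ^ k : ℝ) : ℂ) • (1 : Matrix (tpow n k) (tpow n k) ℂ) ≤
      tpowMat (A + (η : ℂ) • (1 : Matrix n n ℂ)) k := by
  obtain ⟨U, a, hU, rfl, ha⟩ := exists_ud_psd hA
  obtain ⟨k, rfl⟩ : ∃ j, k = j + 1 := ⟨k - 1, by omega⟩
  rw [← ud_const hU, ud_add, tpowMat_ud, tpowMat_ud, ← ud_const (isU_tpow hU (k+1)), ud_add]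
  exact ud_le _ fun I => tprodF_pert ha hη k I

lemma IsQChannel.adj_one {E : Matrix n n ℂ →ₗ[ℂ] Matrix m m ℂ} (hE : IsQChannel E) :
    IsAdj E 1 1 := by
  intro X
  rw [Matrix.mul_one, Matrix.mul_one, hE.1]

lemma IsQChannel.state {E : Matrix n n ℂ →ₗ[ℂ] Matrix m m ℂ} (hE : IsQChannel E)
    {ρ : Matrix n n ℂ} (hρ : IsState ρ) : IsState (E ρ) :=
  ⟨hE.isCP.pos hρ.1, by rw [hE.1, hρ.2]⟩

lemma tpowChannel_state {E : Matrix n n ℂ →ₗ[ℂ] Matrix m m ℂ} (hE : IsQChannel E) (k : ℕ)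
    {ν : Matrix (tpow n k) (tpow n k) ℂ} (hν : IsState ν) : IsState (tpowChannel E k ν) := by
  refine ⟨(tpowChannel_cp hE.isCP k).pos hν.1, ?_⟩
  have := tpowChannel_adj_one hE.adj_one k ν
  rw [Matrix.mul_one, Matrix.mul_one] at this
  rw [this, hν.2]

lemma mul_smul_one_rtr (X : Matrix n n ℂ) (c : ℝ) :
    rtr (X * ((c : ℂ) • (1 : Matrix n n ℂ))) = c * rtr X := by
  rw [Matrix.mul_smul, Matrix.mul_one, rtr_smul]

lemma IsState.rtr {ρ : Matrix n n ℂ} (h : IsState ρ) : QCD.rtr ρ = 1 := by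
  simp [QCD.rtr, h.2]

lemma relEntropy_le_coe {ρ σ : Matrix n n ℂ} {r : ℝ} (h : relEntropy ρ σ ≤ (r : EReal)) :
    SuppLE ρ σ ∧ rtr (ρ * (mlog ρ - mlog σ)) ≤ r := by
  unfold relEntropy at h
  split_ifs at h with hs
  · exact ⟨hs, EReal.coe_le_coe_iff.1 h⟩
  · exact absurd h (not_le.2 (EReal.coe_lt_top r))

lemma smul_le_smul_real {A B : Matrix n n ℂ} (h : A ≤ B) {c : ℝ} (hc : 0 ≤ c) :
    (c : ℂ) • A ≤ (c : ℂ) • B := by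
  rw [Matrix.le_iff, ← smul_sub]
  exact (Matrix.le_iff.1 h).smul (by exact_mod_cast hc)

lemma ncopy {E F : Matrix n n ℂ →ₗ[ℂ] Matrix m m ℂ} (hE : IsQChannel E) (hF : IsQChannel F)
    {σ : Matrix n n ℂ} (hσ : IsState σ) {k : ℕ} (hk : 1 ≤ k)
    {ν : Matrix (tpow n k) (tpow n k) ℂ} (hν : IsState ν) {c : ℝ} (hc : 0 < c)
    (hνσ : ν ≤ (c : ℂ) • tpowMat σ k) {r : ℝ}
    (hrel : relEntropy (tpowChannel E k ν) (tpowChannel F k ν) ≤ (r : EReal))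
    {θ : Matrix m m ℂ} (hθ : θ.PosDef) (hθ1 : θ.trace = 1) {η : ℝ} (hη : 0 < η) :
    rtr (tpowChannel E k ν * lsum (mlog θ - mlog (F σ + (η : ℂ) • (1 : Matrix m m ℂ))) k) ≤
      r + Real.logb 2 c := by
  obtain ⟨hs, hr⟩ := relEntropy_le_coe hrel
  have hω := tpowChannel_state hE k hν
  have hA := (tpowChannel_state hF k hν).1
  have hτ := (hF.state hσ).1
  have hτη := pert_pd hτ hη
  set ω := tpowChannel E k ν
  set A := tpowChannel F k ν with hAdef
  set T := F σ + (η : ℂ) • (1 : Matrix m m ℂ)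
  have hkl := klein hω (tpowMat_posDef hθ k) (trace_tpowMat hθ1 k)
  rw [mlog_tpow hθ] at hkl
  have hlin : lsum (mlog θ - mlog T) k = lsum (mlog θ) k - lsum (mlog T) k := by
    have := lsum_add (mlog θ - mlog T) (mlog T) k
    rw [sub_add_cancel] at this
    rw [this, add_sub_cancel_right]
  have hη' : 0 < c * η ^ k := by positivity
  have h1 := mlog_pert_le hω.1 hA hs hη'
  have hAτ : A ≤ (c : ℂ) • tpowMat (F σ) k := by
    have := (tpowChannel_cp hF.isCP k).mono hνσ
    rwa [map_smul, tpowChannel_tpowMat] at this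
  have h2 : A + ((c * η ^ k : ℝ) : ℂ) • (1 : Matrix (tpow m k) (tpow m k) ℂ) ≤
      (c : ℂ) • tpowMat T k := by
    have h3 := smul_le_smul_real (tpow_pert hτ hη hk) hc.le
    refine le_trans ?_ h3
    rw [smul_add, smul_smul]
    have : ((c * η ^ k : ℝ) : ℂ) = (c : ℂ) * ((η ^ k : ℝ) : ℂ) := by push_cast; rfl
    rw [this]
    exact add_le_add_left hAτ _
  have h3 := rtr_mul_mono hω.1 (mlog_mono (pert_pd hA hη') h2)
  rw [mlog_smul (tpowMat_posDef hτη k) hc, mlog_tpow hτη, Matrix.mul_add, rtr_add,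
    mul_smul_one_rtr, hω.rtr] at h3
  rw [Matrix.mul_sub, rtr_sub] at hr
  rw [hlin, Matrix.mul_sub, rtr_sub]
  linarith

end Main

section Main2
open scoped MatrixOrder
open Matrix

variable {n m : Type} [Fintype n] [DecidableEq n] [Fintype m] [DecidableEq m]

lemma proj_le_one {P : Matrix n n ℂ} (hP : P.IsHermitian) (hPP : P * P = P) : P ≤ 1 := by
  rw [Matrix.le_iff]
  have h : (1 - P) = (1 - P) * (1 - P)ᴴ := by
    rw [conjTranspose_sub, conjTranspose_one, hP.eq]
    noncomm_ring
    rw [hPP]; abel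
  rw [h]
  exact posSemidef_self_mul_conjTranspose _

lemma rtr_sandwich_le {P ρ : Matrix n n ℂ} (hP : P.IsHermitian) (hPP : P * P = P)
    (hρ : ρ.PosSemidef) : rtr (P * ρ * P) ≤ rtr ρ := by
  have h1 := rtr_mul_mono hρ (proj_le_one hP hPP)
  rw [Matrix.mul_one] at h1
  rw [Matrix.mul_assoc, rtr_comm, Matrix.mul_assoc, hPP]
  exact h1

lemma sandwich_psd {P ρ : Matrix n n ℂ} (hP : P.IsHermitian)
    (hρ : ρ.PosSemidef) : (P * ρ * P).PosSemidef := by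
  have := hρ.mul_mul_conjTranspose_same P
  rwa [hP.eq] at this

lemma finite_k {E F : Matrix n n ℂ →ₗ[ℂ] Matrix m m ℂ} (hE : IsQChannel E) (hF : IsQChannel F)
    {ρ σ : Matrix n n ℂ} (hρ : IsState ρ) (hσ : IsState σ) {R : ℝ} {k : ℕ} (hk : 1 ≤ k)
    (hR : ∀ ν : Matrix (tpow n k) (tpow n k) ℂ, IsState ν →
      relEntropy (tpowChannel E k ν) (tpowChannel F k ν) ≤ ((k * R : ℝ) : EReal))
    {θ : Matrix m m ℂ} (hθ : θ.PosDef) (hθ1 : θ.trace = 1) {η : ℝ} (hη : 0 < η)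
    {h0 C : ℝ} {G : Matrix n n ℂ} (hG : G.PosSemidef) (hC : 0 ≤ C)
    (hGC : G ≤ (C : ℂ) • (1 : Matrix n n ℂ))
    (hadj : IsAdj E (mlog θ - mlog (F σ + (η : ℂ) • (1 : Matrix m m ℂ)) +
      (h0 : ℂ) • (1 : Matrix m m ℂ)) G)
    {P Q : Matrix (tpow n k) (tpow n k) ℂ} (hP : P.IsHermitian) (hPP : P * P = P)
    (hQ : Q.IsHermitian) (hQQ : Q * Q = Q) {ε a : ℝ}
    (he : rtr (tpowMat ρ k * (1 - P)) + rtr (tpowMat ρ k * (1 - Q)) ≤ ε) (hε : ε ≤ 1 / 16)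
    (hle : Q * P * tpowMat ρ k * P * Q ≤ (((2 : ℝ) ^ (k * a) : ℝ) : ℂ) • tpowMat σ k)
    {t : ℝ} (ht : 0 < t) :
    (1 - t) * rtr (ρ * G) - C / t * ε ≤ R + a + 1 / k + h0 := by
  have hk0 : (0 : ℝ) < k := by exact_mod_cast hk
  have hρk := tpowMat_psd hρ.1 k
  have hρ1 : rtr (tpowMat ρ k) = 1 := by simp [rtr, trace_tpowMat hρ.2 k]
  set X := tpowMat ρ k with hX
  have hX0 : (Q * P * X * P * Q).PosSemidef := by
    have := sandwich_psd hQ (sandwich_psd hP hρk)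
    simpa [Matrix.mul_assoc] using this
  have hp1 : rtr (Q * P * X * P * Q) ≤ 1 := by
    have h1 := rtr_sandwich_le hQ hQQ (sandwich_psd hP hρk)
    have h2 := rtr_sandwich_le hP hPP hρk
    have h3 : Q * P * X * P * Q = Q * (P * X * P) * Q := by simp [Matrix.mul_assoc]
    rw [h3]; linarith
  have hp2 : 1 / 2 ≤ rtr (Q * P * X * P * Q) := by
    have h1 := gentle (G := (1 : Matrix (tpow n k) (tpow n k) ℂ)) (c := 1) PosSemidef.one
      zero_le_one (by simp) hρk hP hPP hQ hQQ (t := 1 / 4) (by norm_num)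
    rw [Matrix.mul_one, Matrix.mul_one, hρ1] at h1
    linarith
  have hg := gentle (lsum_psd hG k) (by positivity : (0 : ℝ) ≤ k * C) (lsum_le hGC k)
    hρk hP hPP hQ hQQ ht
  have htr : rtr (X * lsum G k) = k * rtr (ρ * G) := by
    unfold rtr
    rw [hX, trace_lsum hρ.2]
    simp
  rw [htr] at hg
  set Y := Q * P * X * P * Q with hY
  set p := rtr Y with hp
  have hp0 : 0 < p := by linarith
  have hYim : Y.trace = (p : ℂ) := by
    have h1 := hX0.trace_nonneg
    have h2 := (Complex.le_def.1 h1).2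
    apply Complex.ext
    · rfl
    · simpa using h2.symm
  set ν := ((p⁻¹ : ℝ) : ℂ) • Y with hν
  have hνs : IsState ν := by
    refine ⟨hX0.smul (by exact_mod_cast (inv_pos.2 hp0).le), ?_⟩
    rw [hν, trace_smul, hYim, smul_eq_mul, ← Complex.ofReal_mul, inv_mul_cancel₀ hp0.ne']
    simp
  have hpinv : p⁻¹ ≤ 2 := by
    rw [inv_le_comm₀ hp0 (by norm_num)]; linarith
  have hc : (0 : ℝ) < 2 * (2 : ℝ) ^ (k * a) := by positivity
  have hνσ : ν ≤ ((2 * (2 : ℝ) ^ (k * a) : ℝ) : ℂ) • tpowMat σ k := by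
    have h1 : ν ≤ ((2 : ℝ) : ℂ) • Y := by
      rw [hν, Matrix.le_iff, ← sub_smul]
      apply hX0.smul
      rw [← Complex.ofReal_sub]
      exact_mod_cast sub_nonneg.2 hpinv
    refine h1.trans ?_
    rw [Complex.ofReal_mul, ← smul_smul]
    exact smul_le_smul_real hle (by norm_num)
  have hn := ncopy hE hF hσ hk hνs hc hνσ (hR ν hνs) hθ hθ1 hη
  have hlog : Real.logb 2 (2 * (2 : ℝ) ^ (k * a)) = 1 + k * a := by
    rw [Real.logb_mul (by norm_num) (by positivity), Real.logb_self_eq_one (by norm_num),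
      Real.logb_rpow (by norm_num) (by norm_num)]
  rw [hlog] at hn
  have hω := tpowChannel_state hE k hνs
  have had := congrArg Complex.re (tpowChannel_adj hE.adj_one hadj k ν)
  change rtr _ = rtr _ at had
  rw [lsum_add, lsum_const, Matrix.mul_add, rtr_add, mul_smul_one_rtr, hω.rtr] at had
  have hνY : rtr (Y * lsum G k) ≤ rtr (ν * lsum G k) := by
    rw [hν, Matrix.smul_mul, rtr_smul]
    have h1 := rtr_mul_nonneg hX0 (lsum_psd hG k)
    have h2 : 1 ≤ p⁻¹ := (one_le_inv₀ hp0).2 hp1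
    nlinarith
  have hkC : k * C / t * (rtr (X * (1 - P)) + rtr (X * (1 - Q))) ≤ k * C / t * ε := by
    gcongr
  have key : k * ((1 - t) * rtr (ρ * G) - C / t * ε) ≤ k * (R + a + 1 / k + h0) := by
    have e1 : k * (R + a + 1 / k + h0) = k * R + k * a + 1 + k * h0 := by field_simp
    have e2 : k * ((1 - t) * rtr (ρ * G) - C / t * ε) =
      (1 - t) * (k * rtr (ρ * G)) - k * C / t * ε := by ring
    rw [e1, e2]
    linarith
  exact le_of_mul_le_mul_left key hk0

lemma main_eta {E F : Matrix n n ℂ →ₗ[ℂ] Matrix m m ℂ} (hE : IsQChannel E) (hF : IsQChannel F)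
    {ρ σ : Matrix n n ℂ} (hρ : IsState ρ) (hσ : IsState σ) (hs : SuppLE ρ σ) {R : ℝ}
    (hR : ∀ k : ℕ, 1 ≤ k → ∀ ν : Matrix (tpow n k) (tpow n k) ℂ, IsState ν →
      relEntropy (tpowChannel E k ν) (tpowChannel F k ν) ≤ ((k * R : ℝ) : EReal))
    {θ : Matrix m m ℂ} (hθ : θ.PosDef) (hθ1 : θ.trace = 1) {η : ℝ} (hη : 0 < η) :
    rtr (E ρ * (mlog θ - mlog (F σ + (η : ℂ) • (1 : Matrix m m ℂ)))) ≤
      R + rtr (ρ * (mlog ρ - mlog σ)) := by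
  have mherm : ∀ {A : Matrix m m ℂ}, A.IsHermitian → (mlog A).IsHermitian := by
    intro A hA
    obtain ⟨U, a, hU, rfl⟩ := exists_ud hA
    rw [mlog_ud hU]; exact ud_herm _ _
  have hH : (mlog θ - mlog (F σ + (η : ℂ) • (1 : Matrix m m ℂ))).IsHermitian :=
    (mherm hθ.1).sub (mherm (pert_pd (hF.state hσ).1 hη).1)
  obtain ⟨h0, -, hh⟩ := exists_le_smul_one hH.neg
  obtain ⟨G, hadj⟩ := exists_isAdj E (mlog θ - mlog (F σ + (η : ℂ) • (1 : Matrix m m ℂ)) +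
      (h0 : ℂ) • (1 : Matrix m m ℂ))
  have hG : G.PosSemidef := by
    refine hadj.psd hE.isCP ?_
    have := Matrix.le_iff.1 hh
    rwa [sub_neg_eq_add, add_comm] at this
  obtain ⟨C, hC, hGC⟩ := exists_le_smul_one hG.1
  obtain ⟨v, hv⟩ := typical hρ hσ hs
  have hrho : rtr (ρ * G) = rtr (E ρ * (mlog θ - mlog (F σ + (η : ℂ) • (1 : Matrix m m ℂ)))) + h0 := by
    have := congrArg Complex.re (hadj ρ)
    change rtr _ = rtr _ at this
    rw [← this, Matrix.mul_add, rtr_add, mul_smul_one_rtr, (hE.state hρ).rtr, mul_one]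
  set D := rtr (ρ * (mlog ρ - mlog σ)) with hD
  have hg0 : 0 ≤ rtr (ρ * G) := rtr_mul_nonneg hρ.1 hG
  have step : ∀ δ : ℝ, 0 < δ → (1 - δ) * rtr (ρ * G) ≤ R + (D + 2 * δ) + h0 := by
    intro δ hδ
    have hinv : Filter.Tendsto (fun k : ℕ => v / δ ^ 2 / (k : ℝ)) Filter.atTop (nhds 0) :=
      tendsto_const_div_atTop_nhds_zero_nat _
    have hinv1 : Filter.Tendsto (fun k : ℕ => (1 : ℝ) / (k : ℝ)) Filter.atTop (nhds 0) :=
      tendsto_const_div_atTop_nhds_zero_nat _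
    have l1 : Filter.Tendsto (fun k : ℕ => (1 - δ) * rtr (ρ * G) - C / δ * (v / δ ^ 2 / (k : ℝ)))
        Filter.atTop (nhds ((1 - δ) * rtr (ρ * G) - C / δ * 0)) :=
      tendsto_const_nhds.sub (hinv.const_mul _)
    have l2 : Filter.Tendsto (fun k : ℕ => R + (D + 2 * δ) + 1 / (k : ℝ) + h0)
        Filter.atTop (nhds (R + (D + 2 * δ) + 0 + h0)) :=
      (hinv1.const_add _).add_const _
    have hev := hinv.eventually (gt_mem_nhds (show (0 : ℝ) < 1 / 16 by norm_num))
    have := le_of_tendsto_of_tendsto l1 l2 (by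
      filter_upwards [hev, Filter.eventually_ge_atTop 1] with k hk hk1
      obtain ⟨P, Q, hP, hPP, hQ, hQQ, he, hle⟩ := hv δ hδ k hk1
      exact finite_k hE hF hρ hσ hk1 (hR k hk1) hθ hθ1 hη hG hC hGC hadj hP hPP hQ hQQ he hk.le hle hδ)
    simpa using this
  rw [hrho] at step hg0
  set g := rtr (E ρ * (mlog θ - mlog (F σ + (η : ℂ) • (1 : Matrix m m ℂ))))
  refine le_of_forall_pos_le_add fun ε hε => ?_
  have h2 : 0 < 2 + (g + h0) := by linarith
  have := step (ε / (2 + (g + h0))) (by positivity)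
  have e : ε / (2 + (g + h0)) * (2 + (g + h0)) = ε := div_mul_cancel₀ _ h2.ne'
  nlinarith

/-- The finite real-valued version. -/
lemma main_real {E F : Matrix n n ℂ →ₗ[ℂ] Matrix m m ℂ} (hE : IsQChannel E) (hF : IsQChannel F)
    {ρ σ : Matrix n n ℂ} (hρ : IsState ρ) (hσ : IsState σ) (hs : SuppLE ρ σ) {R : ℝ}
    (hR : ∀ k : ℕ, 1 ≤ k → ∀ ν : Matrix (tpow n k) (tpow n k) ℂ, IsState ν →
      relEntropy (tpowChannel E k ν) (tpowChannel F k ν) ≤ ((k * R : ℝ) : EReal))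
    (hs' : SuppLE (E ρ) (F σ)) :
    rtr (E ρ * (mlog (E ρ) - mlog (F σ))) ≤ R + rtr (ρ * (mlog ρ - mlog σ)) := by
  have hφ := hE.state hρ
  have hτ := hF.state hσ
  set d : ℝ := (Fintype.card m : ℝ)
  have l1 := mlog_pert_tendsto (ω := E ρ) hφ.1 (fun v hv => hv)
  have l2 := mlog_pert_tendsto hτ.1 hs'
  have l3 : Filter.Tendsto (fun η : ℝ => Real.logb 2 (1 + η * d)) (nhdsWithin 0 (Set.Ioi 0))
      (nhds 0) := by
    have hc : ContinuousAt (fun η : ℝ => Real.logb 2 (1 + η * d)) 0 := by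
      unfold Real.logb
      apply ContinuousAt.div_const
      apply ContinuousAt.log (by fun_prop)
      simp
    have := hc.tendsto.mono_left (nhdsWithin_le_nhds (s := Set.Ioi 0))
    simpa using this
  have l := (l1.sub l3).sub l2
  rw [sub_zero] at l
  rw [Matrix.mul_sub, rtr_sub]
  refine le_of_tendsto l ?_
  filter_upwards [self_mem_nhdsWithin] with η hη
  have hη : 0 < η := hη
  have hd : 0 ≤ d := Nat.cast_nonneg _
  have hc : 0 < 1 + η * d := by positivity
  have hpd := pert_pd hφ.1 hη
  have hcinv : 0 < (1 + η * d)⁻¹ := inv_pos.2 hc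
  have hθ : ((((1 + η * d)⁻¹ : ℝ) : ℂ) • (E ρ + (η : ℂ) • (1 : Matrix m m ℂ))).PosDef :=
    hpd.smul (by exact_mod_cast hcinv)
  have hθ1 : ((((1 + η * d)⁻¹ : ℝ) : ℂ) • (E ρ + (η : ℂ) • (1 : Matrix m m ℂ))).trace = 1 := by
    rw [trace_smul, trace_add, trace_smul, trace_one, hφ.2]
    have : (1 : ℂ) + (η : ℂ) • (Fintype.card m : ℂ) = ((1 + η * d : ℝ) : ℂ) := by
      simp [d]
    rw [this, smul_eq_mul, ← Complex.ofReal_mul, inv_mul_cancel₀ hc.ne']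
    simp
  have := main_eta hE hF hρ hσ hs hR hθ hθ1 hη
  rw [mlog_smul hpd hcinv, Matrix.mul_sub, Matrix.mul_add, rtr_sub, rtr_add, mul_smul_one_rtr,
    hφ.rtr, Real.logb_inv] at this
  linarith

lemma relEntropy_ne_bot (ρ σ : Matrix n n ℂ) : relEntropy ρ σ ≠ ⊥ := by
  unfold relEntropy
  split_ifs
  · exact EReal.coe_ne_bot _
  · exact top_ne_bot

lemma relEntropy_le_chDiv {E F : Matrix n n ℂ →ₗ[ℂ] Matrix m m ℂ} (hE : IsCP E) (hF : IsCP F)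
    {ν : Matrix n n ℂ} (hν : IsState ν) :
    relEntropy (E ν) (F ν) ≤ chDiv relD E F := by
  have hν' : IsState (ν.submatrix (Equiv.uniqueProd n (Fin 1)) (Equiv.uniqueProd n (Fin 1))) := by
    refine ⟨hν.1.submatrix _, ?_⟩
    rw [← hν.2]
    simp only [trace, diag_apply, submatrix_apply]
    exact (Equiv.uniqueProd n (Fin 1)).sum_comp (fun i => ν i i)
  have h1 : relEntropy (E ν) (F ν) =
      relD (Fin 1 × m)
        (blockApply E (ν.submatrix (Equiv.uniqueProd n (Fin 1)) (Equiv.uniqueProd n (Fin 1))))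
        (blockApply F (ν.submatrix (Equiv.uniqueProd n (Fin 1)) (Equiv.uniqueProd n (Fin 1)))) :=
    (relEntropy_submatrix (Equiv.uniqueProd m (Fin 1)) (hE.pos hν.1).1 (hF.pos hν.1).1).symm
  rw [h1]
  unfold chDiv
  exact le_iSup_of_le 1 (le_iSup_of_le le_rfl (le_iSup_of_le _ (le_iSup_of_le hν' le_rfl)))

lemma reg_bound {E F : Matrix n n ℂ →ₗ[ℂ] Matrix m m ℂ} (hE : IsQChannel E) (hF : IsQChannel F)
    {k : ℕ} (hk : 1 ≤ k) {ν : Matrix (tpow n k) (tpow n k) ℂ} (hν : IsState ν) :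
    (((k : ℝ)⁻¹ : ℝ) : EReal) * relEntropy (tpowChannel E k ν) (tpowChannel F k ν) ≤
      regRelEntropy E F := by
  have h1 := relEntropy_le_chDiv (tpowChannel_cp hE.isCP k) (tpowChannel_cp hF.isCP k) hν
  unfold regRelEntropy
  refine le_iSup_of_le k (le_iSup_of_le hk ?_)
  apply mul_le_mul_of_nonneg_left h1
  exact_mod_cast inv_nonneg.2 (Nat.cast_nonneg k)

lemma tpow_state {ρ : Matrix n n ℂ} (hρ : IsState ρ) (k : ℕ) : IsState (tpowMat ρ k) :=
  ⟨tpowMat_psd hρ.1 k, trace_tpowMat hρ.2 k⟩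

lemma suppLE_tpow_one {A B : Matrix n n ℂ} (h : SuppLE (tpowMat A 1) (tpowMat B 1)) :
    SuppLE A B := by
  intro v hv
  have key : ∀ C : Matrix n n ℂ, ∀ i, (tpowMat C 1).mulVec (fun p : tpow n 1 => v p.2) i =
      C.mulVec v i.2 := by
    intro C i
    have : ((1 : Matrix PUnit PUnit ℂ) ⊗ₖ C).mulVec (fun p : PUnit × n => v p.2) i =
        C.mulVec v i.2 := by
      obtain ⟨⟨⟩, i⟩ := i
      simp only [mulVec, dotProduct, Fintype.sum_prod_type]
      simp
      refine Finset.sum_congr rfl fun x _ => ?_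
      change ((1 : Matrix PUnit PUnit ℂ) PUnit.unit PUnit.unit * C i x) * v x = _
      rw [one_apply_eq, one_mul]
    exact this
  have h1 := h (fun p => v p.2) (by funext i; rw [key, hv]; rfl)
  funext i
  have := congrFun h1 (PUnit.unit, i)
  exact (key A (PUnit.unit, i)).symm.trans this

lemma chain_rule_gen {E F : Matrix n n ℂ →ₗ[ℂ] Matrix m m ℂ} (hE : IsQChannel E)
    (hF : IsQChannel F) {ρ σ : Matrix n n ℂ} (hρ : IsState ρ) (hσ : IsState σ) :
    relEntropy (E ρ) (F σ) ≤ relEntropy ρ σ + regRelEntropy E F := by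
  have hreg_bot : regRelEntropy E F ≠ ⊥ := by
    intro h
    have h1 := reg_bound hE hF le_rfl (tpow_state hρ 1)
    rw [h, le_bot_iff] at h1
    simp at h1
    exact relEntropy_ne_bot _ _ h1
  by_cases hs : SuppLE ρ σ
  swap
  · have : relEntropy ρ σ = ⊤ := by unfold relEntropy; rw [if_neg hs]
    rw [this, EReal.top_add_of_ne_bot hreg_bot]
    exact le_top
  by_cases htop : regRelEntropy E F = ⊤
  · rw [htop, EReal.add_top_of_ne_bot (relEntropy_ne_bot _ _)]
    exact le_top
  obtain ⟨R, hRr⟩ : ∃ R : ℝ, regRelEntropy E F = (R : EReal) :=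
    ⟨(regRelEntropy E F).toReal, (EReal.coe_toReal htop hreg_bot).symm⟩
  have hR : ∀ k : ℕ, 1 ≤ k → ∀ ν : Matrix (tpow n k) (tpow n k) ℂ, IsState ν →
      relEntropy (tpowChannel E k ν) (tpowChannel F k ν) ≤ ((k * R : ℝ) : EReal) := by
    intro k hk ν hν
    have h1 := reg_bound hE hF hk hν
    rw [hRr] at h1
    have hk0 : (0 : ℝ) < k := by exact_mod_cast hk
    have h2 : ((k : ℝ) : EReal) * ((((k : ℝ)⁻¹ : ℝ) : EReal) *
        relEntropy (tpowChannel E k ν) (tpowChannel F k ν)) ≤ ((k : ℝ) : EReal) * (R : EReal) :=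
      mul_le_mul_of_nonneg_left h1 (by exact_mod_cast hk0.le)
    rw [← mul_assoc, ← EReal.coe_mul, mul_inv_cancel₀ hk0.ne', EReal.coe_one, one_mul,
      ← EReal.coe_mul] at h2
    exact h2
  have hs' : SuppLE (E ρ) (F σ) := by
    have h1 := (relEntropy_le_coe (hR 1 le_rfl _ (tpow_state hρ 1))).1
    rw [tpowChannel_tpowMat, tpowChannel_tpowMat] at h1
    have h2 := suppLE_tpow_one h1
    obtain ⟨c, hc⟩ := posSemidef_le_of_suppLE hρ.1 hσ.1 hs
    have h3 := hF.isCP.mono hc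
    rw [map_smul] at h3
    have h4 := suppLE_of_le (hF.state hρ).1 (hF.state hσ).1 c h3
    exact fun v hv => h2 v (h4 v hv)
  have hmain := main_real hE hF hρ hσ hs hR hs'
  unfold relEntropy
  rw [if_pos hs, if_pos hs', hRr, ← EReal.coe_add]
  apply EReal.coe_le_coe_iff.2
  linarith

end Main2

/-- Chain rule for the quantum relative entropy. -/
theorem relEntropy_chain_rule {dA dB : ℕ}
    (E F : Matrix (Fin dA) (Fin dA) ℂ →ₗ[ℂ] Matrix (Fin dB) (Fin dB) ℂ)
    (hE : IsQChannel E) (hF : IsQChannel F)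
    (ρ σ : Matrix (Fin dA) (Fin dA) ℂ) (hρ : IsState ρ) (hσ : IsState σ) :
    relEntropy (E ρ) (F σ) ≤ relEntropy ρ σ + regRelEntropy E F := by
  exact chain_rule_gen hE hF hρ hσ

end QCD
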